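/- arXiv:1609.08303 — 16 statements merged into one kernel-verified Lean document; each statement's English description precedes it below -/
import Mathlib

section
/- Let p, q > 1 be coprime integers and let q/p = [a_0, a_1, …, a_n] be its regular continued fraction expansion with a_n ≥ 2. Then K(p,q) = ⌊(a_n − 1)/2⌋. -/
/-!
Let `Q/P` be the penultimate convergent of `q/p` and `Q'/P'` the one before it, so that
`q = a_n Q + Q'`, `p = a_n P + P'`, `q P - p Q = ±1`, `0 ≤ Q' ≤ Q` and `0 ≤ P' ≤ P`
(`cfVal_convergents`, applied to the tail of the expansion).  Everything is symmetric in `p` and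
`q`, so the sign may be taken to be `+1` and `a_0 ≥ 1` may be assumed.

With `q P - p Q = 1`, every `k` gives
`2δ = p (k q - 1 - Q) + q (p - 1 + P - k p)`, and for exactly one parity of `k` both coefficients
are even.  Take `k ∈ {0, 1}` of that parity and halve: `δ = t p + u q`, and
`δ + ρ = (t - ρ Q) p + (u + ρ P) q`.

* If `k = 1`, then `t, u ≥ 0`, so `δ ∈ S`, and membership persists until `t - ρ Q` becomes negative,
  which first happens when `2ρ > a_n - 1`.
* If `k = 0`, then `t < 0` and `u < p`, so `δ ∉ S`, and nonmembership persists until `u + ρ P`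
  reaches `p`, which again first happens when `2ρ > a_n - 1`.

Nonmembership is detected by `notMem_Spq`.
-/

/-- The numerical semigroup generated by `p` and `q`:
all integers of the form `t*p + u*q` with `t, u ≥ 0`. -/
def Spq (p q : ℤ) : Set ℤ := {n : ℤ | ∃ t u : ℤ, 0 ≤ t ∧ 0 ≤ u ∧ n = t * p + u * q}

/-- The set of integers `s ≥ 0` such that `δ, δ+1, …, δ+s` either all belong to `S(p,q)`
or none of them does, where `δ = (p-1)*(q-1)/2`.  `K(p,q)` is the greatest element
of this set. -/
def KSet (p q : ℤ) : Set ℤ :=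
  {s : ℤ | 0 ≤ s ∧ ∀ ρ : ℤ, 0 ≤ ρ → ρ ≤ s →
    ((p - 1) * (q - 1) / 2 + ρ ∈ Spq p q ↔ (p - 1) * (q - 1) / 2 ∈ Spq p q)}

/-- The value of the regular continued fraction `[a 0; a 1, …, a n]`. -/
def cfVal (a : ℕ → ℤ) : ℕ → ℚ
  | 0 => (a 0 : ℚ)
  | n + 1 => (a 0 : ℚ) + 1 / cfVal (fun i => a (i + 1)) n

theorem Spq_comm (p q : ℤ) : Spq p q = Spq q p := by
  ext x
  constructor <;>
  · rintro ⟨t, u, ht, hu, h⟩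
    exact ⟨u, t, hu, ht, by rw [h]; ring⟩

theorem KSet_comm (p q : ℤ) : KSet p q = KSet q p := by
  unfold KSet
  rw [Spq_comm p q, mul_comm (p - 1) (q - 1)]

/-- A representation with `t < 0` and `u < p` certifies nonmembership: all others arise from it by
shifting `(t, u)` by a multiple of `(q, -p)`. -/
theorem notMem_Spq {p q t u : ℤ} (hp : 0 < p) (hq : 0 < q) (hpq : IsCoprime p q)
    (ht : t < 0) (hu : u < p) : t * p + u * q ∉ Spq p q := by
  rintro ⟨T, U, hT, hU, h⟩
  have hdvd : q ∣ T - t := by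
    apply hpq.symm.dvd_of_dvd_mul_right
    exact ⟨u - U, by linear_combination -h⟩
  obtain ⟨c, hc⟩ := hdvd
  have hc1 : 0 < c := by
    by_contra hneg
    nlinarith
  have hu' : u - U = p * c := by
    apply mul_right_cancel₀ hq.ne'
    linear_combination h + p * hc
  nlinarith

theorem isGreatest_of_switch {p q K : ℤ} (hK : 0 ≤ K)
    (h : ((∀ ρ, 0 ≤ ρ → ρ ≤ K → (p - 1) * (q - 1) / 2 + ρ ∈ Spq p q) ∧
        (p - 1) * (q - 1) / 2 + (K + 1) ∉ Spq p q) ∨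
      ((∀ ρ, 0 ≤ ρ → ρ ≤ K → (p - 1) * (q - 1) / 2 + ρ ∉ Spq p q) ∧
        (p - 1) * (q - 1) / 2 + (K + 1) ∈ Spq p q)) :
    IsGreatest (KSet p q) K := by
  rcases h with ⟨h1, h2⟩ | ⟨h1, h2⟩
  all_goals
    have h0 := h1 0 le_rfl hK
    rw [add_zero] at h0
    refine ⟨⟨hK, fun ρ hρ hρK => ?_⟩, ?_⟩
  · exact iff_of_true (h1 ρ hρ hρK) h0
  · rintro s ⟨_, hs⟩
    by_contra hlt
    exact h2 ((hs (K + 1) (by omega) (by omega)).2 h0)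
  · exact iff_of_false (h1 ρ hρ hρK) h0
  · rintro s ⟨_, hs⟩
    by_contra hlt
    exact h0 ((hs (K + 1) (by omega) (by omega)).1 h2)

/-- The theorem in terms of the two convergents `Q/P`, `Q'/P'` before `q/p`, for one sign of the
determinant. -/
theorem isGreatest_of_det_one {p q a P Q P' Q' : ℤ} (ha : 2 ≤ a) (hP : 1 ≤ P) (hQ : 1 ≤ Q)
    (hP' : 0 ≤ P') (hPP : P' ≤ P) (hQ' : 0 ≤ Q') (hQQ : Q' ≤ Q)
    (hp : p = a * P + P') (hq : q = a * Q + Q') (hdet : q * P - p * Q = 1) :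
    IsGreatest (KSet p q) ((a - 1) / 2) := by
  have hdet' : Q' * P - P' * Q = 1 := by
    rw [hp, hq] at hdet
    linear_combination hdet
  have hp0 : 0 < p := by nlinarith
  have hq0 : 0 < q := by nlinarith
  have hcop : IsCoprime p q := ⟨-Q, P, by linear_combination hdet⟩
  have hQ1 : 1 ≤ Q' := by nlinarith
  have hP1 : P' + 1 ≤ P := by
    by_contra hcon
    have : P' = P := by omega
    subst this
    nlinarith
  obtain ⟨K, hK⟩ : ∃ K, K = (a - 1) / 2 := ⟨_, rfl⟩
  have hK1 : 2 * K ≤ a - 1 := by omega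
  have hK2 : a ≤ 2 * (K + 1) := by omega
  have hK3 : 0 ≤ K := by omega
  rw [← hK]
  clear hK
  obtain ⟨d, hd⟩ : ∃ d, d = (p - 1) * (q - 1) / 2 := ⟨_, rfl⟩
  have hd2 : 2 * d = (p - 1) * (q - 1) := by
    have hev : Even ((p - 1) * (q - 1)) := by
      rcases Int.even_or_odd p with h1 | h1
      · rcases Int.even_or_odd q with h2 | h2
        · exfalso
          obtain ⟨x, hx⟩ := h1
          obtain ⟨y, hy⟩ := h2
          have : 2 * (y * P - x * Q) = 1 := by
            rw [← hdet, hx, hy]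
            ring
          omega
        · exact (h2.sub_odd odd_one).mul_left _
      · exact (h1.sub_odd odd_one).mul_right _
    rw [hd]
    exact Int.mul_ediv_cancel' hev.two_dvd
  apply isGreatest_of_switch hK3
  rw [← hd]
  -- `k = 1` or `k = 0` in the halving of `2δ = p (k q - 1 - Q) + q (p - 1 + P - k p)`.
  have hcases : (∃ t u, 2 * t = q - 1 - Q ∧ 2 * u = P - 1) ∨
      (∃ t u, 2 * t = -1 - Q ∧ 2 * u = p - 1 + P) := by
    have hsum : p * (q - 1 - Q) + q * (P - 1) = 2 * d := by
      linear_combination hdet - hd2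
    rcases Int.even_or_odd' P with ⟨x, hx | hx⟩
    · right
      have hpo : Odd p := by
        by_contra hne
        obtain ⟨y, hy⟩ := Int.not_odd_iff_even.1 hne
        have : 2 * (q * x - y * Q) = 1 := by
          rw [← hdet, hx, hy]
          ring
        omega
      obtain ⟨y, hy⟩ := hpo
      have hQo : Odd Q := by
        by_contra hne
        obtain ⟨z, hz⟩ := Int.not_odd_iff_even.1 hne
        have : 2 * (q * x - p * z) = 1 := by
          rw [← hdet, hx, hz]
          ring
        omega
      obtain ⟨z, hz⟩ := hQo
      exact ⟨-1 - z, y + x, by omega, by omega⟩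
    · rcases Int.even_or_odd' (q - 1 - Q) with ⟨y, hy | hy⟩
      · exact Or.inl ⟨y, x, by omega, by omega⟩
      · right
        have hpe : Even p := by
          by_contra hne
          obtain ⟨z, hz⟩ := Int.not_even_iff_odd.1 hne
          have : 2 * (d - q * x - z * (2 * y + 1) - y) = 1 := by
            rw [hx, hy] at hsum
            linear_combination -hsum + (2 * y + 1) * hz
          omega
        obtain ⟨z, hz⟩ := hpe
        have hqo : Odd q := by
          by_contra hne
          obtain ⟨w, hw⟩ := Int.not_odd_iff_even.1 hne
          have : 2 * (w * P - z * Q) = 1 := by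
            rw [← hdet, hz, hw]
            ring
          omega
        obtain ⟨w, hw⟩ := hqo
        exact ⟨y - w, z + x, by omega, by omega⟩
  rcases hcases with ⟨t, u, ht, hu⟩ | ⟨t, u, ht, hu⟩
  · have hrep : ∀ ρ, d + ρ = (t - ρ * Q) * p + (u + ρ * P) * q := by
      intro ρ
      have : 2 * (d + ρ) = 2 * ((t - ρ * Q) * p + (u + ρ * P) * q) := by
        linear_combination hd2 - p * ht - q * hu - (2 * ρ + 1) * hdet
      omega
    left
    refine ⟨fun ρ hρ hρK => ?_, ?_⟩
    · exact ⟨t - ρ * Q, u + ρ * P, by nlinarith, by nlinarith, hrep ρ⟩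
    · rw [hrep]
      exact notMem_Spq hp0 hq0 hcop (by nlinarith) (by nlinarith)
  · have hrep : ∀ ρ, d + ρ = (t - ρ * Q) * p + (u + ρ * P) * q := by
      intro ρ
      have : 2 * (d + ρ) = 2 * ((t - ρ * Q) * p + (u + ρ * P) * q) := by
        linear_combination hd2 - p * ht - q * hu - (2 * ρ + 1) * hdet
      omega
    right
    refine ⟨fun ρ hρ hρK => ?_, ?_⟩
    · rw [hrep]
      exact notMem_Spq hp0 hq0 hcop (by nlinarith) (by nlinarith)
    · refine ⟨t - (K + 1) * Q + q, u + (K + 1) * P - p, by nlinarith, by nlinarith, ?_⟩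
      rw [hrep]
      ring

/-- The two convergents `Q/P`, `Q'/P'` preceding the last one, for positive partial quotients.
For `n = 0` these are the formal ones, `1/0` and `0/1`, so `P' ≤ P` fails there;
`P' + Q' ≤ P + Q` replaces it as the inductive invariant. -/
theorem cfVal_convergents (n : ℕ) : ∀ a : ℕ → ℤ, (∀ i ≤ n, 0 < a i) →
    ∃ P Q P' Q' : ℤ, 0 ≤ P ∧ 1 ≤ Q ∧ 0 ≤ P' ∧ 0 ≤ Q' ∧ Q' ≤ Q ∧ P' + Q' ≤ P + Q ∧
      (Q' * P - P' * Q = 1 ∨ Q' * P - P' * Q = -1) ∧ 0 < a n * P + P' ∧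
      cfVal a n = ((a n * Q + Q' : ℤ) : ℚ) / ((a n * P + P' : ℤ) : ℚ) := by
  induction n with
  | zero =>
    intro a _
    exact ⟨0, 1, 1, 0, by simp [cfVal]⟩
  | succ n ih =>
    intro a ha
    obtain ⟨P, Q, P', Q', hP, hQ, hP', hQ', hQQ, hsum, hdet, hD, hval⟩ :=
      ih (fun i => a (i + 1)) (fun i hi => ha (i + 1) (by omega))
    have h0 : 0 < a 0 := ha 0 (by omega)
    have hn : 0 < a (n + 1) := ha (n + 1) le_rfl
    have hN : 0 < a (n + 1) * Q + Q' := by nlinarith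
    refine ⟨Q, a 0 * Q + P, Q', a 0 * Q' + P', by omega, by nlinarith, hQ', by positivity,
      by nlinarith, by nlinarith, ?_, hN, ?_⟩
    · rcases hdet with h | h
      · right
        linear_combination -h
      · left
        linear_combination -h
    · rw [cfVal, hval]
      have hN' : ((a (n + 1) * Q + Q' : ℤ) : ℚ) ≠ 0 := by exact_mod_cast hN.ne'
      rw [one_div_div]
      field_simp
      push_cast
      ring

theorem eq_of_div_eq {p q D N : ℤ} (hp : 0 < p) (hq : 0 < q) (hD : 0 < D) (hN : 0 < N)
    (hpq : IsCoprime p q) (hDN : IsCoprime D N) (h : (q : ℚ) / p = (N : ℚ) / D) :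
    p = D ∧ q = N := by
  rw [div_eq_div_iff (by exact_mod_cast hp.ne') (by exact_mod_cast hD.ne')] at h
  have h' : q * D = N * p := by exact_mod_cast h
  constructor
  · apply Int.dvd_antisymm hp.le hD.le
    · exact hpq.dvd_of_dvd_mul_left ⟨N, by linear_combination h'⟩
    · exact hDN.dvd_of_dvd_mul_left ⟨q, by linear_combination -h'⟩
  · apply Int.dvd_antisymm hq.le hN.le
    · exact hpq.symm.dvd_of_dvd_mul_right ⟨D, by linear_combination -h'⟩
    · exact hDN.symm.dvd_of_dvd_mul_right ⟨p, by linear_combination h'⟩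

theorem isGreatest_of_pos (p q : ℤ) (hp : 1 < p) (hq : 1 < q) (hpq : IsCoprime p q)
    (n : ℕ) (a : ℕ → ℤ) (hcf : (q : ℚ) / (p : ℚ) = cfVal a n)
    (hpos : ∀ i ≤ n, 0 < a i) (hlast : 2 ≤ a n) :
    IsGreatest (KSet p q) ((a n - 1) / 2) := by
  cases n with
  | zero =>
    -- The value is an integer, which forces `p = 1`.
    exfalso
    have h : (q : ℚ) / p = (a 0 : ℚ) / ((1 : ℤ) : ℚ) := by simpa [cfVal] using hcf
    have := eq_of_div_eq (by omega) (by omega) one_pos (by omega) hpq isCoprime_one_left h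
    omega
  | succ n =>
    obtain ⟨P, Q, P', Q', hP, hQ, hP', hQ', hQQ, hsum, hdet, hD, hval⟩ :=
      cfVal_convergents n (fun i => a (i + 1)) (fun i hi => hpos (i + 1) (by omega))
    have h0 : 0 < a 0 := hpos 0 (by omega)
    -- One more step of the recursion, now with `P' ≤ P` for the new convergents.
    have hN : 0 < a (n + 1) * Q + Q' := by nlinarith
    have hval' : (q : ℚ) / p = ((a (n + 1) * (a 0 * Q + P) + (a 0 * Q' + P') : ℤ) : ℚ) /
        ((a (n + 1) * Q + Q' : ℤ) : ℚ) := by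
      rw [hcf, cfVal, hval]
      have hN' : ((a (n + 1) * Q + Q' : ℤ) : ℚ) ≠ 0 := by exact_mod_cast hN.ne'
      rw [one_div_div]
      field_simp
      push_cast
      ring
    have hcop : IsCoprime (a (n + 1) * Q + Q')
        (a (n + 1) * (a 0 * Q + P) + (a 0 * Q' + P')) := by
      rcases hdet with h | h
      · exact ⟨a 0 * Q + P, -Q, by linear_combination h⟩
      · exact ⟨-(a 0 * Q + P), Q, by linear_combination -h⟩
    have hM : 0 < a (n + 1) * (a 0 * Q + P) + (a 0 * Q' + P') := by
      have : 0 < a 0 * Q := by positivity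
      positivity
    obtain ⟨hpe, hqe⟩ := eq_of_div_eq (by omega) (by omega) hN hM hpq hcop hval'
    have hQ1 : 1 ≤ a 0 * Q + P := by nlinarith
    have hQ2 : 0 ≤ a 0 * Q' + P' := by positivity
    have hQ3 : a 0 * Q' + P' ≤ a 0 * Q + P := by nlinarith
    rcases hdet with h | h
    · rw [KSet_comm]
      exact isGreatest_of_det_one hlast hQ1 hQ hQ2 hQ3 hQ' hQQ hqe hpe
        (by rw [hpe, hqe]; linear_combination h)
    · exact isGreatest_of_det_one hlast hQ hQ1 hQ' hQQ hQ2 hQ3 hpe hqe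
        (by rw [hpe, hqe]; linear_combination -h)

theorem one_le_cfVal (n : ℕ) : ∀ a : ℕ → ℤ, (∀ i ≤ n, 0 < a i) → 1 ≤ cfVal a n := by
  induction n with
  | zero =>
    intro a ha
    have := ha 0 le_rfl
    rw [cfVal]
    exact_mod_cast this
  | succ n ih =>
    intro a ha
    have h1 := ih (fun i => a (i + 1)) (fun i hi => ha (i + 1) (by omega))
    have h0 : (1 : ℚ) ≤ a 0 := by exact_mod_cast ha 0 (by omega)
    have h2 : 0 < 1 / cfVal (fun i => a (i + 1)) n := by positivity
    rw [cfVal]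
    linarith

theorem stmt0 (p q : ℤ) (hp : 1 < p) (hq : 1 < q) (hpq : Int.gcd p q = 1)
    (n : ℕ) (a : ℕ → ℤ)
    (hcf : (q : ℚ) / (p : ℚ) = cfVal a n)
    (hpos : ∀ i : ℕ, 1 ≤ i → i ≤ n → 0 < a i)
    (hlast : 2 ≤ a n) :
    IsGreatest (KSet p q) ((a n - 1) / 2) := by
  have hcop : IsCoprime p q := Int.isCoprime_iff_gcd_eq_one.2 hpq
  rcases lt_or_ge 0 (a 0) with h0 | h0
  · refine isGreatest_of_pos p q hp hq hcop n a hcf (fun i hi => ?_) hlast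
    rcases Nat.eq_zero_or_pos i with rfl | hi0
    · exact h0
    · exact hpos i hi0 hi
  · cases n with
    | zero => omega
    | succ n =>
      have htail : ∀ i ≤ n, 0 < a (i + 1) := fun i hi => hpos (i + 1) (by omega) (by omega)
      have h1 := one_le_cfVal n (fun i => a (i + 1)) htail
      have hp' : (0 : ℚ) < p := by exact_mod_cast (by omega : 0 < p)
      have hq' : (0 : ℚ) < q := by exact_mod_cast (by omega : 0 < q)
      rw [cfVal] at hcf
      have h2 : 1 / cfVal (fun i => a (i + 1)) n ≤ 1 := by
        rw [div_le_one (by linarith)]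
        exact h1
      have h3 : 0 < (q : ℚ) / p := by positivity
      have h4 : a 0 = 0 := by
        have h5 : (-1 : ℚ) < a 0 := by linarith
        have h6 : -1 < a 0 := by exact_mod_cast h5
        omega
      -- When `a 0 = 0`, the tail is the expansion of `p / q`, and `K` is symmetric.
      have hcf' : (p : ℚ) / q = cfVal (fun i => a (i + 1)) n := by
        rw [h4, Int.cast_zero, zero_add] at hcf
        rw [← one_div_div (q : ℚ) p, hcf, one_div_one_div]
      rw [KSet_comm]
      exact isGreatest_of_pos q p hq hp hcop.symm n _ hcf' htail hlast
end

section
/- Let p, q > 1 be coprime integers and ρ ≥ 0 an integer. Suppose δ + ρ = t·p + u·q for some integers t, u. Then: u ≡ r_ρ (mod p) if either (p is odd and r̄ is odd) or (p is even and k + l is even); and u ≡ r′_ρ (mod p) if either (p is odd and r̄ is even) or (p is even and k + l is odd). -/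
theorem stmt2 (p q k r rb l ρ t u : ℤ) (hp : 1 < p) (hq : 1 < q)
    (hpq : Int.gcd p q = 1)
    (hqkr : q = k * p + r) (hr0 : 0 < r) (hrp : r < p)
    (hrb0 : 0 < rb) (hrbp : rb < p) (hrrb : r * rb = 1 + l * p)
    (hρ : 0 ≤ ρ)
    (heq : (p - 1) * (q - 1) / 2 + ρ = t * p + u * q) :
    (((Odd p ∧ Odd rb) ∨ (Even p ∧ Even (k + l))) →
      u ≡ ((rb - 1) / 2 + ρ * rb) % p [ZMOD p]) ∧
    (((Odd p ∧ Even rb) ∨ (Even p ∧ Odd (k + l))) →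
      u ≡ ((p + rb - 1) / 2 + ρ * rb) % p [ZMOD p]) := by
  have hm : q * rb = 1 + p * (k * rb + l) := by
    rw [hqkr]; linear_combination hrrb
  -- If `p` is even, then `q * rb` is odd, hence so are both factors.
  have hpar : Even p → Odd q ∧ Odd rb := by
    intro hpe
    have hodd : Odd (q * rb) := by
      rw [hm]; exact odd_one.add_even (hpe.mul_right _)
    exact Int.odd_mul.mp hodd
  have hδ : Even ((p - 1) * (q - 1)) := by
    rcases Int.even_or_odd p with h | h
    · exact ((hpar h).1.sub_odd odd_one).mul_left _
    · exact (h.sub_odd odd_one).mul_right _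
  have h2 := Int.two_mul_ediv_two_of_even hδ
  have key : 2 * u = (rb - 1) + 2 * (ρ * rb)
      + p * (1 - rb - (k * rb + l) + p * (k * rb + l))
      - 2 * (p * (t * rb + u * (k * rb + l))) := by
    linear_combination (-2 * rb) * heq + rb * h2 + (p - 1 - 2 * u) * hm
  constructor
  · intro h
    have hpr : Even (rb - 1) ∧ Even (1 - rb - (k * rb + l) + p * (k * rb + l)) := by
      simp only [← Int.not_even_iff_odd, Int.even_add, Int.even_sub, Int.even_mul, Int.not_even_one]
        at h hpar ⊢
      tauto
    obtain ⟨ha, e, he⟩ := hpr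
    have ha2 := Int.two_mul_ediv_two_of_even ha
    refine Int.ModEq.trans ?_ (Int.mod_modEq _ _).symm
    refine (Int.modEq_iff_dvd.mpr ⟨e - (t * rb + u * (k * rb + l)), ?_⟩).symm
    rw [he] at key
    linarith
  · intro h
    have hpr : Even (p + rb - 1) ∧ Odd (1 - rb - (k * rb + l) + p * (k * rb + l)) := by
      simp only [← Int.not_even_iff_odd, Int.even_add, Int.even_sub, Int.even_mul, Int.not_even_one]
        at h hpar ⊢
      tauto
    obtain ⟨ha, e, he⟩ := hpr
    have ha2 := Int.two_mul_ediv_two_of_even ha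
    refine Int.ModEq.trans ?_ (Int.mod_modEq _ _).symm
    refine (Int.modEq_iff_dvd.mpr ⟨e - (t * rb + u * (k * rb + l)), ?_⟩).symm
    rw [he] at key
    linarith
end

section
/- Let p, q > 1 be coprime integers and suppose r̄ is odd. Then the set of residues ρ with 0 ≤ ρ < p satisfying r_ρ ≤ ⌈p/2⌉ − 1 has exactly ⌈p/2⌉ elements, and ρ = 0 belongs to this set. -/
theorem stmt3 (p q k r rb : ℤ) (hp : 1 < p) (hq : 1 < q)
    (hpq : Int.gcd p q = 1)
    (hqkr : q = k * p + r) (hr0 : 0 < r) (hrp : r < p)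
    (hrb0 : 0 < rb) (hrbp : rb < p) (hrrb : r * rb ≡ 1 [ZMOD p])
    (hodd : Odd rb) :
    Set.ncard {ρ : ℤ | 0 ≤ ρ ∧ ρ < p ∧
        ((rb - 1) / 2 + ρ * rb) % p ≤ (p + 1) / 2 - 1} = ((p + 1) / 2).toNat ∧
    (0 : ℤ) ∈ {ρ : ℤ | 0 ≤ ρ ∧ ρ < p ∧
        ((rb - 1) / 2 + ρ * rb) % p ≤ (p + 1) / 2 - 1} := by
  -- With `a = (rb - 1) / 2`, the inverse of `ρ ↦ (a + ρ * rb) % p` is `m ↦ ((m - a) * r) % p`.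
  set a := (rb - 1) / 2 with ha
  have hleft : ∀ m : ℤ, (a + ((m - a) * r) % p * rb) % p = m % p := by
    intro m
    have h1 : ((m - a) * r) % p * rb ≡ (m - a) * r * rb [ZMOD p] :=
      (Int.mod_modEq _ _).mul_right _
    have h2 : (m - a) * r * rb ≡ m - a [ZMOD p] := by
      simpa [mul_assoc] using hrrb.mul_left (m - a)
    have h3 := (h1.trans h2).add_left a
    rwa [add_sub_cancel] at h3
  have hright : ∀ ρ : ℤ, (((a + ρ * rb) % p - a) * r) % p = ρ % p := by
    intro ρ
    have h1 : ((a + ρ * rb) % p - a) * r ≡ (a + ρ * rb - a) * r [ZMOD p] :=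
      ((Int.mod_modEq _ _).sub_right _).mul_right _
    have h2 : (a + ρ * rb - a) * r ≡ ρ [ZMOD p] := by
      have h3 := hrrb.mul_left ρ
      rw [mul_one] at h3
      convert h3 using 1
      ring
    exact h1.trans h2
  constructor
  · have himage : {ρ : ℤ | 0 ≤ ρ ∧ ρ < p ∧ (a + ρ * rb) % p ≤ (p + 1) / 2 - 1} =
        (fun m : ℤ => ((m - a) * r) % p) '' (Finset.Ico (0 : ℤ) ((p + 1) / 2) : Set ℤ) := by
      ext ρ
      simp only [Set.mem_ofPred_eq, Set.mem_image, Finset.coe_Ico, Set.mem_Ico]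
      constructor
      · rintro ⟨h0, h1, h2⟩
        refine ⟨(a + ρ * rb) % p, ⟨Int.emod_nonneg _ (by omega), by omega⟩, ?_⟩
        rw [hright, Int.emod_eq_of_lt h0 h1]
      · rintro ⟨m, ⟨h0, h1⟩, rfl⟩
        refine ⟨Int.emod_nonneg _ (by omega), Int.emod_lt_of_pos _ (by omega), ?_⟩
        rw [hleft, Int.emod_eq_of_lt h0 (by omega)]
        omega
    rw [himage, Set.InjOn.ncard_image, Set.ncard_coe_finset, Int.card_Ico, sub_zero]
    intro m hm n hn hmn
    simp only [Finset.coe_Ico, Set.mem_Ico] at hm hn hmn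
    have h := hleft m
    rw [hmn, hleft n, Int.emod_eq_of_lt hm.1 (by omega),
      Int.emod_eq_of_lt hn.1 (by omega)] at h
    exact h.symm
  · refine ⟨le_rfl, by omega, ?_⟩
    rw [zero_mul, add_zero, Int.emod_eq_of_lt (by omega) (by omega)]
    omega
end

section
/- Let p, q > 1 be coprime integers and suppose r̄ is odd. Then K(p,q) equals the greatest nonnegative integer σ such that for all integers ρ with 0 ≤ ρ ≤ σ one has r_ρ ≤ ⌈p/2⌉ − 1. -/
lemma mem_Spq_of_dvd {p q n u : ℤ} (hp : 0 < p) (hu : 0 ≤ u) (hd : p ∣ n - u * q)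
    (hlow : -p < n - u * q) : n ∈ Spq p q := by
  obtain ⟨c, hc⟩ := hd
  refine ⟨c, u, ?_, hu, by linarith⟩
  by_contra! h
  nlinarith

lemma not_mem_Spq_of_dvd {p q n u : ℤ} (hp : 0 < p) (hq : 0 < q) (hpq : Int.gcd p q = 1)
    (hup : u < p) (hd : p ∣ n - u * q) (hlt : n < u * q) : n ∉ Spq p q := by
  rintro ⟨t, v, ht, hv, rfl⟩
  have h1 : p ∣ (v - u) * q := by
    obtain ⟨c, hc⟩ := hd
    exact ⟨c - t, by linear_combination hc⟩
  obtain ⟨c, hc⟩ := (Int.isCoprime_iff_gcd_eq_one.mpr hpq).dvd_of_dvd_mul_right h1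
  have hc0 : 0 ≤ c := by
    by_contra! h
    nlinarith
  have huv : u ≤ v := by nlinarith
  nlinarith [mul_nonneg ht hp.le]

lemma residue_succ (p a b ρ : ℤ) (hp : 0 < p) (hb0 : 0 < b) (hbp : b < p) :
    (a + (ρ + 1) * b) % p = (a + ρ * b) % p + b ∨
      (a + (ρ + 1) * b) % p = (a + ρ * b) % p + b - p := by
  have h0 := Int.emod_nonneg (a + ρ * b) hp.ne'
  have h1 := Int.emod_lt_of_pos (a + ρ * b) hp
  have e : (a + (ρ + 1) * b) % p = ((a + ρ * b) % p + b) % p := by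
    rw [Int.emod_add_emod]
    ring_nf
  rw [e]
  rcases lt_or_ge ((a + ρ * b) % p + b) p with h | h
  · left
    exact Int.emod_eq_of_lt (by omega) h
  · right
    rw [← Int.sub_emod_right]
    exact Int.emod_eq_of_lt (by omega) (by omega)

lemma exists_large_residue (p a b : ℤ) (hp : 1 < p) (hb0 : 0 < b) (hbp : b < p)
    (hab : b = 2 * a + 1) :
    ∃ ρ : ℤ, 0 ≤ ρ ∧ ρ ≤ (p + 1) / 2 ∧ (p + 1) / 2 ≤ (a + ρ * b) % p := by
  by_contra! hcon
  have hr0 (ρ : ℤ) : 0 ≤ (a + ρ * b) % p := Int.emod_nonneg _ (by omega)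
  have hrp (ρ : ℤ) : (a + ρ * b) % p < p := Int.emod_lt_of_pos _ (by omega)
  have ha : (a + 0 * b) % p = a := by
    rw [zero_mul, add_zero]
    exact Int.emod_eq_of_lt (by omega) (by omega)
  rcases le_or_gt b (p - (p + 1) / 2) with hb | hb
  -- The residue increases by `b` at each step, so it is at least `ρ`.
  · have key : ∀ n : ℕ, (n : ℤ) ≤ (p + 1) / 2 → (n : ℤ) ≤ (a + (n : ℤ) * b) % p := by
      intro n
      induction n with
      | zero => intro _; exact hr0 _
      | succ n ih =>
        intro hn
        push_cast at hn ⊢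
        have h1 := ih (by omega)
        have h2 := hcon n (by omega) (by omega)
        have h3 := hr0 ((n : ℤ) + 1)
        rcases residue_succ p a b n (by omega) hb0 hbp with h | h <;> omega
    have h1 := key ((p + 1) / 2).toNat (by omega)
    rw [Int.toNat_of_nonneg (by omega)] at h1
    have h2 := hcon ((p + 1) / 2) (by omega) le_rfl
    omega
  -- The residue decreases by `p - b` at each step, so it would become negative.
  · have key : ∀ n : ℕ, (n : ℤ) ≤ (p + 1) / 2 → (a + (n : ℤ) * b) % p ≤ a - n := by
      intro n
      induction n with
      | zero => intro _; push_cast; rw [ha]; omega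
      | succ n ih =>
        intro hn
        push_cast at hn ⊢
        have h1 := ih (by omega)
        have h2 := hcon ((n : ℤ) + 1) (by omega) (by omega)
        have h3 := hr0 (n : ℤ)
        rcases residue_succ p a b n (by omega) hb0 hbp with h | h <;> omega
    have h1 := key ((p + 1) / 2).toNat (by omega)
    rw [Int.toNat_of_nonneg (by omega)] at h1
    have h2 := hr0 ((p + 1) / 2)
    omega

/-- On the range `0 ≤ ρ ≤ ⌈p/2⌉`, membership of `δ + ρ` in the semigroup is either always
equivalent, or always opposite, to the smallness of the residue `r_ρ`. -/
lemma membership_dichotomy (p q a m : ℤ) (hp : 1 < p) (hq : 1 < q) (hpq : Int.gcd p q = 1)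
    (hm : q * (2 * a + 1) = 1 + m * p) :
    (∀ ρ : ℤ, 0 ≤ ρ → ρ ≤ (p + 1) / 2 → ((p - 1) * (q - 1) / 2 + ρ ∈ Spq p q ↔
      (a + ρ * (2 * a + 1)) % p ≤ (p + 1) / 2 - 1)) ∨
    (∀ ρ : ℤ, 0 ≤ ρ → ρ ≤ (p + 1) / 2 → ((p - 1) * (q - 1) / 2 + ρ ∈ Spq p q ↔
      ¬ (a + ρ * (2 * a + 1)) % p ≤ (p + 1) / 2 - 1)) := by
  have hr0 (ρ : ℤ) : 0 ≤ (a + ρ * (2 * a + 1)) % p := Int.emod_nonneg _ (by omega)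
  have hrp (ρ : ℤ) : (a + ρ * (2 * a + 1)) % p < p := Int.emod_lt_of_pos _ (by omega)
  have hdiv (ρ : ℤ) := Int.emod_add_mul_ediv (a + ρ * (2 * a + 1)) p
  rcases Int.even_or_odd' p with ⟨h, rfl | rfl⟩
  · obtain ⟨g, rfl⟩ : Odd q := by
      rcases Int.even_or_odd' q with ⟨g, rfl | hg⟩
      · rw [Int.gcd_mul_left] at hpq
        simp at hpq
      · exact ⟨g, hg⟩
    have hδ : (2 * h - 1) * (2 * g + 1 - 1) / 2 = (2 * h - 1) * g := by
      rw [show (2 * h - 1) * (2 * g + 1 - 1) = 2 * ((2 * h - 1) * g) by ring]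
      omega
    have hH : (2 * h + 1) / 2 = h := by omega
    rw [hδ, hH]
    have hgm : 2 * g * a + g + a = h * m := by linarith
    rcases Int.even_or_odd' m with ⟨m', rfl | rfl⟩
    · left
      intro ρ hρ0 hρ
      have h0 := hr0 ρ
      have h1 := hrp ρ
      have h2 := hdiv ρ
      set u := (a + ρ * (2 * a + 1)) % (2 * h)
      set c := (a + ρ * (2 * a + 1)) / (2 * h)
      have hd : 2 * h ∣ (2 * h - 1) * g + ρ - u * (2 * g + 1) := by
        refine ⟨g - m' - ρ * (2 * m') + c * (2 * g + 1), ?_⟩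
        linear_combination (-(2 * g + 1)) * h2 - hgm - ρ * hm
      constructor
      · intro hmem
        by_contra! hlt
        refine not_mem_Spq_of_dvd (by omega) (by omega) hpq h1 hd ?_ hmem
        nlinarith
      · intro hle
        refine mem_Spq_of_dvd (by omega) h0 hd ?_
        nlinarith
    · right
      intro ρ hρ0 hρ
      have h0 := hr0 ρ
      have h1 := hrp ρ
      have h2 := hdiv ρ
      set u := (a + ρ * (2 * a + 1)) % (2 * h)
      set c := (a + ρ * (2 * a + 1)) / (2 * h)
      have hd : 2 * h ∣ (2 * h - 1) * g + ρ - (u + h) * (2 * g + 1) := by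
        refine ⟨- m' - 1 - ρ * (2 * m' + 1) + c * (2 * g + 1), ?_⟩
        linear_combination (-(2 * g + 1)) * h2 - hgm - ρ * hm
      constructor
      · intro hmem hle
        refine not_mem_Spq_of_dvd (by omega) (by omega) hpq (by omega) hd ?_ hmem
        nlinarith
      · intro hle
        have hd' : 2 * h ∣ (2 * h - 1) * g + ρ - (u - h) * (2 * g + 1) := by
          obtain ⟨e, he⟩ := hd
          exact ⟨e + (2 * g + 1), by linear_combination he⟩
        refine mem_Spq_of_dvd (by omega) (by omega) hd' ?_
        nlinarith
  · left
    have hδ : (2 * h + 1 - 1) * (q - 1) / 2 = h * (q - 1) := by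
      rw [show (2 * h + 1 - 1) * (q - 1) = 2 * (h * (q - 1)) by ring]
      omega
    have hH : (2 * h + 1 + 1) / 2 = h + 1 := by omega
    rw [hδ, hH]
    intro ρ hρ0 hρ
    have h0 := hr0 ρ
    have h1 := hrp ρ
    have h2 := hdiv ρ
    set u := (a + ρ * (2 * a + 1)) % (2 * h + 1)
    set c := (a + ρ * (2 * a + 1)) / (2 * h + 1)
    have hd : 2 * h + 1 ∣ h * (q - 1) + ρ - u * q := by
      -- Twice `X = (h - a) q - h` is `p (q - m - 1)`, and `X = (h + 1) (2 X) - p X`.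
      refine ⟨(h + 1) * (q - m - 1) - ((h - a) * q - h) - ρ * m + c * q, ?_⟩
      linear_combination (-q) * h2 - (h + 1 + ρ) * hm
    constructor
    · intro hmem
      by_contra! hlt
      refine not_mem_Spq_of_dvd (by omega) (by omega) hpq h1 hd ?_ hmem
      nlinarith
    · intro hle
      refine mem_Spq_of_dvd (by omega) h0 hd ?_
      nlinarith

theorem stmt5 (p q k r rb : ℤ) (hp : 1 < p) (hq : 1 < q)
    (hpq : Int.gcd p q = 1)
    (hqkr : q = k * p + r) (hr0 : 0 < r) (hrp : r < p)
    (hrb0 : 0 < rb) (hrbp : rb < p) (hrrb : r * rb ≡ 1 [ZMOD p])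
    (hodd : Odd rb) :
    ∀ σ : ℤ, IsGreatest {σ' : ℤ | 0 ≤ σ' ∧ ∀ ρ : ℤ, 0 ≤ ρ → ρ ≤ σ' →
        ((rb - 1) / 2 + ρ * rb) % p ≤ (p + 1) / 2 - 1} σ ↔
      IsGreatest (KSet p q) σ := by
  obtain ⟨a, rfl⟩ := hodd
  have ha : (2 * a + 1 - 1) / 2 = a := by omega
  rw [ha]
  obtain ⟨m, hm⟩ : ∃ m, q * (2 * a + 1) = 1 + m * p := by
    obtain ⟨c, hc⟩ := hrrb.symm.dvd
    exact ⟨k * (2 * a + 1) + c, by rw [hqkr]; linear_combination hc⟩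
  have hA0 : (a + 0 * (2 * a + 1)) % p ≤ (p + 1) / 2 - 1 := by
    rw [zero_mul, add_zero, Int.emod_eq_of_lt (by omega) (by omega)]
    omega
  have key : ∀ ρ : ℤ, 0 ≤ ρ → ρ ≤ (p + 1) / 2 →
      (((p - 1) * (q - 1) / 2 + ρ ∈ Spq p q ↔ (p - 1) * (q - 1) / 2 ∈ Spq p q) ↔
        (a + ρ * (2 * a + 1)) % p ≤ (p + 1) / 2 - 1) := by
    intro ρ hρ0 hρ
    rcases membership_dichotomy p q a m hp hq hpq hm with h | h
    all_goals
      have h1 := h ρ hρ0 hρ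
      have h2 := h 0 le_rfl (by omega)
      rw [add_zero] at h2
      tauto
  obtain ⟨ρ₀, hρ₀0, hρ₀H, hρ₀⟩ := exists_large_residue p a (2 * a + 1) hp hrb0 hrbp rfl
  have hset : {σ' : ℤ | 0 ≤ σ' ∧ ∀ ρ : ℤ, 0 ≤ ρ → ρ ≤ σ' →
      (a + ρ * (2 * a + 1)) % p ≤ (p + 1) / 2 - 1} = KSet p q := by
    ext s
    simp only [KSet, Set.mem_ofPred_eq]
    -- Every element of either set is smaller than the failure point `ρ₀`.
    constructor
    · rintro ⟨hs, h⟩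
      have hlt : s < ρ₀ := by
        by_contra! hge
        have := h ρ₀ hρ₀0 hge
        omega
      exact ⟨hs, fun ρ h0 h1 => (key ρ h0 (by omega)).mpr (h ρ h0 h1)⟩
    · rintro ⟨hs, h⟩
      have hlt : s < ρ₀ := by
        by_contra! hge
        have := (key ρ₀ hρ₀0 hρ₀H).mp (h ρ₀ hρ₀0 hge)
        omega
      exact ⟨hs, fun ρ h0 h1 => (key ρ h0 (by omega)).mp (h ρ h0 h1)⟩
  intro σ
  rw [hset]
end

section
/- Let p, q > 1 be coprime integers and suppose r̄ is even (hence p is odd). Then K(p,q) equals the greatest nonnegative integer σ such that for all integers ρ with 0 ≤ ρ ≤ σ one has r′_ρ ≥ ⌈p/2⌉. -/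
/-- If `u` is the residue in `[0, p)` with `u q ≡ n (mod p)`, then `u q` is the least element of
the semigroup in the class of `n`. -/
lemma mem_Spq_iff {p q n u : ℤ} (hp : 1 < p) (hq : 1 < q) (hpq : IsCoprime p q)
    (hu0 : 0 ≤ u) (hup : u < p) (h : p ∣ u * q - n) : n ∈ Spq p q ↔ u * q ≤ n := by
  constructor
  · rintro ⟨t, v, ht, hv, rfl⟩
    have h1 : p ∣ (u - v) * q := by
      have h2 : (u - v) * q = (u * q - (t * p + v * q)) + p * t := by ring
      rw [h2]
      exact dvd_add h (Dvd.intro _ rfl)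
    obtain ⟨w, hw⟩ := hpq.dvd_of_dvd_mul_right h1
    have hw0 : w ≤ 0 := by
      by_contra! hc
      nlinarith
    have huv : u ≤ v := by nlinarith
    nlinarith
  · intro hle
    obtain ⟨w, hw⟩ := h
    exact ⟨-w, u, by nlinarith, hu0, by linarith⟩

theorem stmt6 (p q k r rb : ℤ) (hp : 1 < p) (hq : 1 < q)
    (hpq : Int.gcd p q = 1)
    (hqkr : q = k * p + r) (hr0 : 0 < r) (hrp : r < p)
    (hrb0 : 0 < rb) (hrbp : rb < p) (hrrb : r * rb ≡ 1 [ZMOD p])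
    (heven : Even rb) :
    ∀ σ : ℤ, IsGreatest {σ' : ℤ | 0 ≤ σ' ∧ ∀ ρ : ℤ, 0 ≤ ρ → ρ ≤ σ' →
        (p + 1) / 2 ≤ ((p + rb - 1) / 2 + ρ * rb) % p} σ ↔
      IsGreatest (KSet p q) σ := by
  have hcop : IsCoprime p q := Int.isCoprime_iff_gcd_eq_one.mpr hpq
  obtain ⟨c, hc⟩ := heven
  obtain ⟨j, hj⟩ : ∃ j, q * rb = 1 + p * j := by
    obtain ⟨j, hj⟩ := hrrb.symm.dvd
    exact ⟨j + k * rb, by rw [hqkr]; linear_combination hj⟩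
  -- `1 + p * j = q * rb` is even, so both `p` and `j` are odd.
  have hodd : Odd (p * j) := by
    have h1 : p * j = 2 * (q * c - 1) + 1 := by rw [hc] at hj; linear_combination -hj
    exact ⟨_, h1⟩
  obtain ⟨⟨m, hm⟩, ⟨i, hi⟩⟩ := Int.odd_mul.mp hodd
  have hδ : (p - 1) * (q - 1) / 2 = m * (q - 1) := by
    rw [hm, show (2 * m + 1 - 1) * (q - 1) = m * (q - 1) * 2 by ring]
    exact Int.mul_ediv_cancel _ (by norm_num)
  have hstart : (p + rb - 1) / 2 = m + c := by omega
  have hhalf : (p + 1) / 2 = m + 1 := by omega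
  have hcq : c * q = p * (i + 1) - m := by
    subst hc hm hi
    linarith
  -- `u ρ` is the residue of `(δ + ρ) * rb`, the inverse of `q` being `rb`.
  set u : ℤ → ℤ := fun ρ => (m + c + ρ * rb) % p with hu
  have hu0 : ∀ ρ, 0 ≤ u ρ := fun ρ => Int.emod_nonneg _ (by omega)
  have hup : ∀ ρ, u ρ < p := fun ρ => Int.emod_lt_of_pos _ (by omega)
  have hdvd : ∀ ρ, p ∣ u ρ * q - (m * (q - 1) + ρ) := by
    intro ρ
    have h1 : u ρ = (m + c + ρ * rb) - p * ((m + c + ρ * rb) / p) := by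
      have := Int.emod_add_mul_ediv (m + c + ρ * rb) p
      simp only [hu]
      linarith
    refine ⟨i + 1 + ρ * j - q * ((m + c + ρ * rb) / p), ?_⟩
    rw [h1]
    linear_combination hcq + ρ * hj
  have hmem : ∀ ρ, m * (q - 1) + ρ ∈ Spq p q ↔ u ρ * q ≤ m * (q - 1) + ρ := fun ρ =>
    mem_Spq_iff hp hq hcop (hu0 ρ) (hup ρ) (hdvd ρ)
  have hlow : ∀ ρ, 0 ≤ ρ → m * (q - 1) + ρ ∉ Spq p q → m + 1 ≤ u ρ := by
    intro ρ hρ hn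
    rw [hmem, not_le] at hn
    by_contra! hlt
    obtain ⟨w, hw⟩ := hdvd ρ
    have hw1 : 1 ≤ w := by
      by_contra! hc
      nlinarith
    nlinarith
  have hhigh : ∀ ρ, ρ < m → m + 1 ≤ u ρ → m * (q - 1) + ρ ∉ Spq p q := by
    intro ρ hρ h
    rw [hmem, not_le]
    nlinarith
  have hum : u m = m := by
    -- `δ + m = m * q`, and `u m` is determined by its class modulo `p`.
    have h1 : p ∣ (u m - m) * q := by
      have := hdvd m
      rwa [show u m * q - (m * (q - 1) + m) = (u m - m) * q by ring] at this
    obtain ⟨w, hw⟩ := hcop.dvd_of_dvd_mul_right h1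
    have := hu0 m
    have := hup m
    have hw0 : w = 0 := by
      have : w < 1 := by nlinarith
      have : -1 < w := by nlinarith
      omega
    rw [hw0] at hw
    linarith
  have hu00 : u 0 = m + c := by
    simp only [hu, zero_mul, add_zero]
    exact Int.emod_eq_of_lt (by omega) (by omega)
  have hδS : m * (q - 1) ∉ Spq p q := by
    have := hhigh 0 (by omega) (by omega)
    simpa using this
  have hset : {σ' : ℤ | 0 ≤ σ' ∧ ∀ ρ : ℤ, 0 ≤ ρ → ρ ≤ σ' →
      (p + 1) / 2 ≤ ((p + rb - 1) / 2 + ρ * rb) % p} = KSet p q := by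
    ext s
    simp only [KSet, Set.mem_setOf_eq, hδ, hstart, hhalf, hδS, iff_false]
    refine and_congr_right fun hs => ⟨fun h => ?_, fun h ρ h0 h1 => hlow ρ h0 (h ρ h0 h1)⟩
    have hsm : s < m := by
      by_contra! hms
      have h1 : m + 1 ≤ u m := h m (by omega) hms
      omega
    exact fun ρ h0 h1 => hhigh ρ (by omega) (h ρ h0 h1)
  intro σ
  rw [hset]
end

section
/- Let p, q > 1 be coprime integers with q > p + 1. Then K(p,q) = K(p, q − p). -/
/-- Coprimality makes the division by two in `δ` exact. -/
lemma two_mul_delta {p q : ℤ} (h : IsCoprime p q) :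
    2 * ((p - 1) * (q - 1) / 2) = (p - 1) * (q - 1) := by
  apply Int.mul_ediv_cancel'
  rcases Int.even_or_odd p with hp | hp
  · rcases Int.even_or_odd q with hq | hq
    · have := h.isUnit_of_dvd' hp.two_dvd hq.two_dvd
      rw [Int.isUnit_iff] at this
      omega
    · obtain ⟨k, rfl⟩ := hq
      exact ⟨(p - 1) * k, by ring⟩
  · obtain ⟨k, rfl⟩ := hp
    exact ⟨k * (q - 1), by ring⟩

/-- The sign of the centred coordinate `x` decides membership in the semigroup. -/
lemma mem_iff_of_rep {p q ρ x y : ℤ} (hp : 1 < p) (hq : 1 < q) (h : IsCoprime p q)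
    (hx : Odd x) (hy : Odd (y + p)) (hy1 : -p < y) (hy2 : y < p)
    (hr : 2 * ρ + 1 = x * p + y * q) :
    (p - 1) * (q - 1) / 2 + ρ ∈ Spq p q ↔ 0 < x := by
  have hd := two_mul_delta h
  obtain ⟨t, rfl⟩ := hx
  obtain ⟨u, hu⟩ := hy
  obtain rfl : y = 2 * u + 1 - p := by linarith
  have hn : (p - 1) * (q - 1) / 2 + ρ = t * p + u * q := by linarith
  rw [hn]
  constructor
  · rintro ⟨a, b, ha, hb, hab⟩
    by_contra hneg
    have ht : t < 0 := by omega
    have hdvd : p ∣ (u - b) * q := ⟨a - t, by linarith⟩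
    have hlt : 0 < (u - b) * q := by nlinarith
    have hpos : 0 < u - b := pos_of_mul_pos_left hlt (by linarith)
    have := Int.le_of_dvd hpos (h.dvd_of_dvd_mul_right hdvd)
    omega
  · intro hpos
    exact ⟨t, u, by omega, by omega, rfl⟩

lemma exists_rep {p q : ℤ} (hp : 1 < p) (h : IsCoprime p q) (ρ : ℤ) :
    ∃ x y : ℤ, Odd x ∧ Odd (y + p) ∧ -p < y ∧ y < p ∧ 2 * ρ + 1 = x * p + y * q := by
  have hd := two_mul_delta h
  obtain ⟨a, b, hab⟩ := h
  set n := (p - 1) * (q - 1) / 2 + ρ with hn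
  have h1 := Int.emod_nonneg (n * b) (show p ≠ 0 by omega)
  have h2 := Int.emod_lt_of_pos (n * b) (show 0 < p by omega)
  have h3 := Int.emod_add_mul_ediv (n * b) p
  set u := n * b % p
  set c := n * b / p
  refine ⟨2 * (n * a + c * q) + 1, 2 * u - p + 1, ⟨_, rfl⟩, ⟨u, by ring⟩, by omega, by omega, ?_⟩
  linear_combination 2 * hn - hd - 2 * n * hab - 2 * q * h3

lemma agree_of_odd {p q ρ : ℤ} (hp : 1 < p) (hq : 1 < q) (h : IsCoprime p q)
    (h' : IsCoprime p (q - p)) (hq' : 1 < q - p) (hodd : Odd p)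
    (h0 : 0 ≤ ρ) (hρ : 2 * ρ + 1 < 2 * (q - p) + p) :
    (p - 1) * (q - p - 1) / 2 + ρ ∈ Spq p (q - p) ↔ (p - 1) * (q - 1) / 2 + ρ ∈ Spq p q := by
  obtain ⟨x, y, hx, hy, hy1, hy2, hr⟩ := exists_rep hp h ρ
  have hye : Even y := by
    have := hy.sub_odd hodd
    simpa using this
  have hr' : 2 * ρ + 1 = (x + y) * p + y * (q - p) := by rw [hr]; ring
  rw [mem_iff_of_rep hp hq h hx hy hy1 hy2 hr,
    mem_iff_of_rep hp hq' h' (hx.add_even hye) hy hy1 hy2 hr']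
  constructor
  · intro hpos
    by_contra hneg
    have hy3 : 2 ≤ y := by
      obtain ⟨k, rfl⟩ := hye
      omega
    nlinarith
  · intro hpos
    by_contra hneg
    have hy3 : y < 0 := by omega
    nlinarith

lemma flip_of_even {p q ρ : ℤ} (hp : 1 < p) (hq : 1 < q) (h : IsCoprime p q)
    (h' : IsCoprime p (q - p)) (hq' : 1 < q - p) (heven : Even p) (hqodd : Odd (q - p))
    (h0 : 0 ≤ ρ) (hρ : 2 * ρ + 1 < (q - p) + p) :
    (p - 1) * (q - p - 1) / 2 + ρ ∈ Spq p (q - p) ↔ ¬ (p - 1) * (q - 1) / 2 + ρ ∈ Spq p q := by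
  obtain ⟨x, y, hx, hy, hy1, hy2, hr⟩ := exists_rep hp h ρ
  have hyo : Odd y := by
    have := hy.sub_even heven
    simpa using this
  have hxy : Even (x + y) := hx.add_odd hyo
  rw [mem_iff_of_rep hp hq h hx hy hy1 hy2 hr]
  have hy0 : y ≠ 0 := by
    rintro rfl
    simp at hyo
  rcases lt_or_gt_of_ne hy0 with hneg | hpos
  · have hr' : 2 * ρ + 1 = (x + y - (q - p)) * p + (y + p) * (q - p) := by rw [hr]; ring
    rw [mem_iff_of_rep hp hq' h' (hxy.sub_odd hqodd) (hy.add_even heven) (by omega) (by omega) hr']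
    have hx0 : 0 < x := by
      by_contra hc
      nlinarith
    have hx1 : ¬ 0 < x + y - (q - p) := by
      intro hc
      nlinarith
    tauto
  · have hr' : 2 * ρ + 1 = (x + y + (q - p)) * p + (y - p) * (q - p) := by rw [hr]; ring
    rw [mem_iff_of_rep hp hq' h' (hxy.add_odd hqodd) ((hyo.sub_even heven).add_even heven)
      (by omega) (by omega) hr']
    have hx0 : ¬ 0 < x := by
      intro hc
      nlinarith
    have hx1 : 0 < x + y + (q - p) := by
      by_contra hc
      nlinarith
    tauto

/-- For odd `p`, the value `r = p`, with coordinates `(1, 0)`, gives a member. The least positive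
`r = y*q - p` with `y` even gives a non-member. -/
lemma witnesses_of_odd {p q : ℤ} (hp : 1 < p) (hq : 1 < q) (h : IsCoprime p q) (hodd : Odd p) :
    (∃ ρ, 0 ≤ ρ ∧ 2 * ρ + 1 < 2 * q + p ∧ (p - 1) * (q - 1) / 2 + ρ ∈ Spq p q) ∧
    (∃ ρ, 0 ≤ ρ ∧ 2 * ρ + 1 < 2 * q + p ∧ ¬ (p - 1) * (q - 1) / 2 + ρ ∈ Spq p q) := by
  obtain ⟨m, hm⟩ := id hodd
  constructor
  · refine ⟨m, by omega, by omega, ?_⟩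
    rw [mem_iff_of_rep (x := 1) (y := 0) hp hq h odd_one (by simpa using hodd)
      (by omega) (by omega) (by omega)]
    exact one_pos
  · have h1 := Int.emod_nonneg p (show 2 * q ≠ 0 by omega)
    have h2 := Int.emod_lt_of_pos p (show 0 < 2 * q by omega)
    have h3 := Int.emod_add_mul_ediv p (2 * q)
    have hk : 0 ≤ p / (2 * q) := Int.ediv_nonneg (by omega) (by omega)
    set k := p / (2 * q)
    have h4 : 2 * q * k = 2 * (q * k) := by ring
    refine ⟨q * k + q - m - 1, by omega, by omega, ?_⟩
    rw [mem_iff_of_rep (x := -1) (y := 2 * (k + 1)) hp hq h (by decide)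
      ((even_two_mul _).add_odd hodd) (by omega) ?_ (by rw [hm]; ring)]
    · decide
    · by_contra hc
      have : 2 * k ≤ q * k := mul_le_mul_of_nonneg_right (by omega) hk
      omega

/-- For even `p`, the value `r = q`, with coordinates `(q, 1 - p)`, gives a member. The least
positive `r = y*q - p` with `y` odd gives a non-member. -/
lemma witnesses_of_even {p q : ℤ} (hp : 1 < p) (hq : 1 < q) (h : IsCoprime p q) (heven : Even p)
    (hqodd : Odd q) :
    (∃ ρ, 0 ≤ ρ ∧ 2 * ρ + 1 < q + p ∧ (p - 1) * (q - 1) / 2 + ρ ∈ Spq p q) ∧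
    (∃ ρ, 0 ≤ ρ ∧ 2 * ρ + 1 < q + p ∧ ¬ (p - 1) * (q - 1) / 2 + ρ ∈ Spq p q) := by
  obtain ⟨m, hm⟩ := id heven
  obtain ⟨l, hl⟩ := id hqodd
  constructor
  · refine ⟨l, by omega, by omega, ?_⟩
    rw [mem_iff_of_rep (x := q) (y := 1 - p) hp hq h hqodd (by simp)
      (by omega) (by omega) (by rw [← hl]; ring)]
    omega
  · have h1 := Int.emod_nonneg (p + q) (show 2 * q ≠ 0 by omega)
    have h2 := Int.emod_lt_of_pos (p + q) (show 0 < 2 * q by omega)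
    have h3 := Int.emod_add_mul_ediv (p + q) (2 * q)
    have hk : 0 ≤ (p + q) / (2 * q) := Int.ediv_nonneg (by omega) (by omega)
    -- When `p < q` the least odd `y` is `1`, and the bound on `r` comes from `r = q - p`.
    have hk0 : p < q → (p + q) / (2 * q) = 0 := fun hlt =>
      Int.ediv_eq_zero_of_lt (by omega) (by omega)
    set k := (p + q) / (2 * q)
    have h4 : 2 * q * k = 2 * (q * k) := by ring
    refine ⟨q * k + l - m, by omega, ?_, ?_⟩
    · rcases lt_or_ge p q with hlt | hge
      · have h5 : q * k = 0 := by rw [hk0 hlt, mul_zero]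
        omega
      · omega
    rw [mem_iff_of_rep (x := -1) (y := 2 * k + 1) hp hq h (by decide)
      ((odd_two_mul_add_one _).add_even heven) (by omega) ?_ (by linear_combination hm - hl)]
    · decide
    · by_contra hc
      have : p + 1 ≤ 2 * k + 1 := by omega
      have hq3 : 3 ≤ q := by omega
      nlinarith

/-- If membership for `q` and for `q'` is the same up to a global negation in a range of `ρ`
on which membership for `q'` is not constant, then the sets of run lengths coincide. -/
lemma KSet_eq_of_range {p q q' N : ℤ}
    (hiff : (∀ ρ, 0 ≤ ρ → 2 * ρ + 1 < N →
        ((p - 1) * (q' - 1) / 2 + ρ ∈ Spq p q' ↔ (p - 1) * (q - 1) / 2 + ρ ∈ Spq p q)) ∨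
      (∀ ρ, 0 ≤ ρ → 2 * ρ + 1 < N →
        ((p - 1) * (q' - 1) / 2 + ρ ∈ Spq p q' ↔ ¬ (p - 1) * (q - 1) / 2 + ρ ∈ Spq p q)))
    (hw : (∃ ρ, 0 ≤ ρ ∧ 2 * ρ + 1 < N ∧ (p - 1) * (q' - 1) / 2 + ρ ∈ Spq p q') ∧
      (∃ ρ, 0 ≤ ρ ∧ 2 * ρ + 1 < N ∧ ¬ (p - 1) * (q' - 1) / 2 + ρ ∈ Spq p q')) :
    KSet p q = KSet p q' := by
  obtain ⟨⟨a, ha0, haN, ha⟩, ⟨b, hb0, hbN, hb⟩⟩ := hw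
  -- On the range, equality of membership values at `ρ` and at `0` is equivalent for `q` and `q'`.
  have key : ∀ ρ, 0 ≤ ρ → 2 * ρ + 1 < N →
      (((p - 1) * (q - 1) / 2 + ρ ∈ Spq p q ↔ (p - 1) * (q - 1) / 2 ∈ Spq p q) ↔
       ((p - 1) * (q' - 1) / 2 + ρ ∈ Spq p q' ↔ (p - 1) * (q' - 1) / 2 ∈ Spq p q')) := by
    intro ρ h0 hN
    rcases hiff with hi | hi
    · have e0 := hi 0 le_rfl (by omega)
      have e1 := hi ρ h0 hN
      rw [add_zero, add_zero] at e0
      tauto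
    · have e0 := hi 0 le_rfl (by omega)
      have e1 := hi ρ h0 hN
      rw [add_zero, add_zero] at e0
      tauto
  have hsmall' : ∀ s, s ∈ KSet p q' → 2 * s + 1 < N := by
    rintro s ⟨_, hs⟩
    by_contra hc
    have e1 := hs a ha0 (by omega)
    have e2 := hs b hb0 (by omega)
    tauto
  have hsmall : ∀ s, s ∈ KSet p q → 2 * s + 1 < N := by
    rintro s ⟨_, hs⟩
    by_contra hc
    have e1 := (key a ha0 haN).1 (hs a ha0 (by omega))
    have e2 := (key b hb0 hbN).1 (hs b hb0 (by omega))
    tauto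
  ext s
  constructor
  · intro hs
    have := hsmall s hs
    exact ⟨hs.1, fun ρ h0 h1 => (key ρ h0 (by omega)).1 (hs.2 ρ h0 h1)⟩
  · intro hs
    have := hsmall' s hs
    exact ⟨hs.1, fun ρ h0 h1 => (key ρ h0 (by omega)).2 (hs.2 ρ h0 h1)⟩

theorem stmt7 (p q : ℤ) (hp : 1 < p) (hq : 1 < q)
    (hpq : Int.gcd p q = 1) (hqp : p + 1 < q) :
    ∀ s : ℤ, IsGreatest (KSet p q) s ↔ IsGreatest (KSet p (q - p)) s := by
  have h : IsCoprime p q := Int.isCoprime_iff_gcd_eq_one.2 hpq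
  have h' : IsCoprime p (q - p) := by
    obtain ⟨a, b, hab⟩ := h
    exact ⟨a + b, b, by linear_combination hab⟩
  have hq' : 1 < q - p := by omega
  have hK : KSet p q = KSet p (q - p) := by
    rcases Int.even_or_odd p with he | ho
    · have hqodd : Odd (q - p) := by
        rw [← Int.not_even_iff_odd]
        intro hqe
        have := h'.isUnit_of_dvd' he.two_dvd hqe.two_dvd
        rw [Int.isUnit_iff] at this
        omega
      exact KSet_eq_of_range
        (Or.inr fun ρ h0 hN => flip_of_even hp hq h h' hq' he hqodd h0 hN)
        (witnesses_of_even hp hq' h' he hqodd)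
    · exact KSet_eq_of_range
        (Or.inl fun ρ h0 hN => agree_of_odd hp hq h h' hq' ho h0 hN)
        (witnesses_of_odd hp hq' h' ho)
  intro s
  rw [hK]
end

section
/- Let p, q > 1 be coprime integers with q ≡ 1 (mod p). Then K(p,q) = ⌈p/2⌉ − 1 = ⌊(p−1)/2⌋. -/
lemma mem_Spq_iff_s8 {p k m r : ℤ} (hk : 0 ≤ k) (hr : 0 ≤ r) (hrp : r < p) :
    m * p + r ∈ Spq p (1 + k * p) ↔ r * k ≤ m := by
  constructor
  · rintro ⟨t, u, ht, hu, h⟩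
    -- `u ≡ r` modulo `p`, and `r` is the least nonnegative residue, so `u = r + p * j`, `j ≥ 0`.
    obtain ⟨j, hj⟩ : ∃ j, j = m - t - u * k := ⟨_, rfl⟩
    have hu' : u = r + p * j := by rw [hj]; linarith
    have hj0 : 0 ≤ j := by
      by_contra hneg
      have : p * j ≤ p * (-1) := mul_le_mul_of_nonneg_left (by omega) (by omega)
      omega
    have hru : r ≤ u := by
      have : 0 ≤ p * j := mul_nonneg (by omega) hj0
      omega
    have := mul_le_mul_of_nonneg_right hru hk
    omega
  · intro h
    exact ⟨m - r * k, r, by omega, hr, by ring⟩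

/-- The maximum of `KSet p q` is `s` as soon as `s + 1` is the first offset at which membership
differs from that of `δ`. -/
lemma isGreatest_KSet {p q s : ℤ} (hs : 0 ≤ s)
    (h : ∀ ρ : ℤ, 0 ≤ ρ → ρ ≤ s + 1 →
      (((p - 1) * (q - 1) / 2 + ρ ∈ Spq p q ↔ (p - 1) * (q - 1) / 2 ∈ Spq p q) ↔ ρ ≤ s)) :
    IsGreatest (KSet p q) s := by
  refine ⟨⟨hs, fun ρ h0 h1 => (h ρ h0 (by omega)).2 h1⟩, ?_⟩
  rintro x ⟨_, hx⟩
  by_contra hlt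
  have := (h (s + 1) (by omega) le_rfl).1 (hx (s + 1) (by omega) (by omega))
  omega

theorem stmt8 (p q : ℤ) (hp : 1 < p) (hq : 1 < q)
    (hpq : Int.gcd p q = 1) (hmod : q ≡ 1 [ZMOD p]) :
    IsGreatest (KSet p q) ((p + 1) / 2 - 1) ∧ (p + 1) / 2 - 1 = (p - 1) / 2 := by
  refine ⟨?_, by omega⟩
  obtain ⟨k, hk⟩ : ∃ k, q = 1 + k * p := by
    obtain ⟨k, hk⟩ := hmod.symm.dvd
    exact ⟨k, by linarith⟩
  subst hk
  have hk : 0 < k := by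
    by_contra hneg
    have := mul_nonneg (show 0 ≤ -k by omega) (show 0 ≤ p by omega)
    linarith
  apply isGreatest_KSet (by omega)
  intro ρ h0 h1
  rcases Int.even_or_odd' p with ⟨a, ha | ha⟩
  · have hs : (p + 1) / 2 - 1 = a - 1 := by omega
    rw [hs] at h1 ⊢
    rcases Int.even_or_odd' k with ⟨b, hb | hb⟩
    · have hd : (p - 1) * (1 + k * p - 1) / 2 = ((2 * a - 1) * b) * p := by
        apply Int.ediv_eq_of_eq_mul_right two_ne_zero
        rw [ha, hb]; ring
      have hz : ((2 * a - 1) * b) * p ∈ Spq p (1 + k * p) := by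
        have := (mem_Spq_iff_s8 (m := (2 * a - 1) * b) hk.le le_rfl (by omega : 0 < p)).2
          (by rw [zero_mul]; exact mul_nonneg (by omega) (by omega))
        simpa using this
      rw [hd, mem_Spq_iff_s8 hk.le h0 (by omega), iff_true_right hz, hb,
        show ρ * (2 * b) = (2 * ρ) * b by ring, mul_le_mul_iff_left₀ (by omega)]
      omega
    · have hd : (p - 1) * (1 + k * p - 1) / 2 = ((2 * a - 1) * b + a - 1) * p + a := by
        apply Int.ediv_eq_of_eq_mul_right two_ne_zero
        rw [ha, hb]; ring
      have hb0 : 0 ≤ b := by omega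
      have hab : 0 ≤ a * b := mul_nonneg (by omega) hb0
      have hz : ¬ ((2 * a - 1) * b + a - 1) * p + a ∈ Spq p (1 + k * p) := by
        rw [mem_Spq_iff_s8 hk.le (by omega) (by omega), hb]
        intro h
        linarith
      rw [hd, iff_false_right hz, add_assoc]
      rcases eq_or_lt_of_le h1 with h | h
      · have hmem : ((2 * a - 1) * b + a - 1) * p + (a + ρ) ∈ Spq p (1 + k * p) := by
          have := (mem_Spq_iff_s8 (m := (2 * a - 1) * b + a) hk.le le_rfl (by omega : 0 < p)).2
            (by rw [zero_mul]; nlinarith)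
          convert this using 1
          rw [h, ha]; ring
        simp only [hmem, not_true_eq_false, false_iff]
        omega
      · rw [mem_Spq_iff_s8 hk.le (by omega) (by omega), hb]
        have : 0 ≤ ρ * b := mul_nonneg h0 hb0
        exact iff_of_true (fun h => by linarith) (by omega)
  · have hs : (p + 1) / 2 - 1 = a := by omega
    rw [hs] at h1 ⊢
    have hd : (p - 1) * (1 + k * p - 1) / 2 = (a * k) * p := by
      apply Int.ediv_eq_of_eq_mul_right two_ne_zero
      rw [ha]; ring
    have hz : (a * k) * p ∈ Spq p (1 + k * p) := by
      have := (mem_Spq_iff_s8 (m := a * k) hk.le le_rfl (by omega : 0 < p)).2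
        (by rw [zero_mul]; exact mul_nonneg (by omega) (by omega))
      simpa using this
    rw [hd, mem_Spq_iff_s8 hk.le h0 (by omega), iff_true_right hz, mul_le_mul_iff_left₀ hk]
end

section
/- Let p, q > 1 be coprime integers with p odd and r̄ odd. Let ρ be an integer with 0 ≤ ρ ≤ (p−1)/2 and r_ρ ≤ ⌈p/2⌉ − 1. Then δ + ρ ∈ S(p,q); indeed there exists an integer t ≥ 0 with δ + ρ = t·p + r_ρ·q. -/
theorem stmt10 (p q k r rb ρ : ℤ) (hp : 1 < p) (hq : 1 < q)
    (hpq : Int.gcd p q = 1) (hpodd : Odd p)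
    (hqkr : q = k * p + r) (hr0 : 0 < r) (hrp : r < p)
    (hrb0 : 0 < rb) (hrbp : rb < p) (hrrb : r * rb ≡ 1 [ZMOD p])
    (hodd : Odd rb)
    (hρ0 : 0 ≤ ρ) (hρ1 : ρ ≤ (p - 1) / 2)
    (hrρ : ((rb - 1) / 2 + ρ * rb) % p ≤ (p + 1) / 2 - 1) :
    (p - 1) * (q - 1) / 2 + ρ ∈ Spq p q ∧
    ∃ t : ℤ, 0 ≤ t ∧
      (p - 1) * (q - 1) / 2 + ρ = t * p + (((rb - 1) / 2 + ρ * rb) % p) * q := by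
  obtain ⟨m, rfl⟩ := hpodd
  obtain ⟨c, rfl⟩ := hodd
  have hδ : (2 * m + 1 - 1) * (q - 1) / 2 = m * (q - 1) := by
    rw [show (2 * m + 1 - 1) * (q - 1) = 2 * (m * (q - 1)) by ring]
    exact Int.mul_ediv_cancel_left _ (by norm_num)
  have hc : (2 * c + 1 - 1) / 2 = c := by omega
  rw [hc] at hrρ
  rw [hδ, hc]
  have hs0 : 0 ≤ (c + ρ * (2 * c + 1)) % (2 * m + 1) := Int.emod_nonneg _ (by omega)
  have hdm := Int.emod_add_mul_ediv (c + ρ * (2 * c + 1)) (2 * m + 1)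
  set s := (c + ρ * (2 * c + 1)) % (2 * m + 1)
  set d := (c + ρ * (2 * c + 1)) / (2 * m + 1)
  have hsm : s ≤ m := by omega
  have hρm : ρ ≤ m := by omega
  obtain ⟨e, he⟩ := hrrb.symm.dvd
  suffices h : ∃ t : ℤ, 0 ≤ t ∧ m * (q - 1) + ρ = t * (2 * m + 1) + s * q by
    obtain ⟨t, ht, h⟩ := h
    exact ⟨⟨t, s, ht, hs0, h⟩, t, ht, h⟩
  have hq' : q * (2 * c + 1) = 1 + (2 * m + 1) * (e + k * (2 * c + 1)) := by
    rw [hqkr]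
    linear_combination he
  have h2N : 2 * (m * (q - 1) + ρ - s * q) =
      (2 * m + 1) * (q - 1 + 2 * d * q - (1 + 2 * ρ) * (e + k * (2 * c + 1))) := by
    linear_combination (-2 * q) * hdm - (1 + 2 * ρ) * hq'
  have hdvd : 2 * m + 1 ∣ m * (q - 1) + ρ - s * q :=
    -- `N = (2m + 1) N - m (2N)`, and both terms are multiples of `p = 2m + 1`.
    ⟨m * (q - 1) + ρ - s * q -
        m * (q - 1 + 2 * d * q - (1 + 2 * ρ) * (e + k * (2 * c + 1))),
      by linear_combination (-m) * h2N⟩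
  obtain ⟨t, ht⟩ := hdvd
  refine ⟨t, ?_, by linear_combination ht⟩
  by_contra! hneg
  have h1 : 0 ≤ (m - s) * q := mul_nonneg (by omega) (by omega)
  have h2 : (2 * m + 1) * t ≤ (2 * m + 1) * (-1) :=
    mul_le_mul_of_nonneg_left (by omega) (by omega)
  linarith
end

section
/- Let p, q > 1 be coprime integers with p odd and r̄ odd. Let ρ be an integer with 0 ≤ ρ ≤ (p+1)/2 and r_ρ ≥ (p+1)/2. Then δ + ρ ∉ S(p,q). -/
theorem stmt11 (p q k r rb ρ : ℤ) (hp : 1 < p) (hq : 1 < q)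
    (hpq : Int.gcd p q = 1) (hpodd : Odd p)
    (hqkr : q = k * p + r) (hr0 : 0 < r) (hrp : r < p)
    (hrb0 : 0 < rb) (hrbp : rb < p) (hrrb : r * rb ≡ 1 [ZMOD p])
    (hodd : Odd rb)
    (hρ0 : 0 ≤ ρ) (hρ1 : ρ ≤ (p + 1) / 2)
    (hrρ : (p + 1) / 2 ≤ ((rb - 1) / 2 + ρ * rb) % p) :
    (p - 1) * (q - 1) / 2 + ρ ∉ Spq p q := by
  rintro ⟨t, u, ht, hu, h⟩
  obtain ⟨a, rfl⟩ := hpodd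
  obtain ⟨b, rfl⟩ := hodd
  obtain ⟨m, hm⟩ := hrrb.symm.dvd
  rw [show (2 * a + 1 - 1) * (q - 1) / 2 = a * (q - 1) by
    rw [show (2 * a + 1 - 1) * (q - 1) = 2 * (a * (q - 1)) by ring]
    exact Int.mul_ediv_cancel_left _ (by norm_num)] at h
  rw [show (2 * a + 1 + 1) / 2 = a + 1 by omega] at hρ1 hrρ
  rw [show (2 * b + 1 - 1) / 2 = b by omega] at hrρ
  -- `2b + 1` inverts `q` modulo `p = 2a + 1`, and `-2a ≡ 1`, so `u ≡ b + ρ (2b + 1)`.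
  have hdvd : (2 * a + 1) ∣ (b + ρ * (2 * b + 1)) - u := by
    refine ⟨b - a * (m + k * (2 * b + 1)) + t * (2 * b + 1) + u * (m + k * (2 * b + 1)), ?_⟩
    subst hqkr
    linear_combination (2 * b + 1) * h + (u - a) * hm
  have hmod : (b + ρ * (2 * b + 1)) % (2 * a + 1) = u % (2 * a + 1) :=
    Int.emod_eq_emod_iff_emod_sub_eq_zero.mpr (Int.emod_eq_zero_of_dvd hdvd)
  have hua : a + 1 ≤ u := by
    have hdiv : 0 ≤ (2 * a + 1) * (u / (2 * a + 1)) :=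
      mul_nonneg (by omega) (Int.ediv_nonneg hu (by omega))
    linarith [Int.mul_ediv_add_emod u (2 * a + 1)]
  nlinarith [mul_nonneg ht (by omega : (0 : ℤ) ≤ 2 * a + 1),
    mul_le_mul_of_nonneg_right hua (by omega : (0 : ℤ) ≤ q)]
end

section
/- Let p, q > 1 be coprime integers with p odd and r̄ even. Let ρ be an integer with 0 ≤ ρ ≤ (p−3)/2 and r′_ρ ≥ (p+1)/2. Then δ + ρ ∉ S(p,q). -/
theorem stmt12 (p q k r rb ρ : ℤ) (hp : 1 < p) (hq : 1 < q)
    (hpq : Int.gcd p q = 1) (hpodd : Odd p)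
    (hqkr : q = k * p + r) (hr0 : 0 < r) (hrp : r < p)
    (hrb0 : 0 < rb) (hrbp : rb < p) (hrrb : r * rb ≡ 1 [ZMOD p])
    (heven : Even rb)
    (hρ0 : 0 ≤ ρ) (hρ1 : ρ ≤ (p - 3) / 2)
    (hrρ : (p + 1) / 2 ≤ ((p + rb - 1) / 2 + ρ * rb) % p) :
    (p - 1) * (q - 1) / 2 + ρ ∉ Spq p q := by
  rintro ⟨t, u, ht, hu, h⟩
  obtain ⟨m, rfl⟩ := hpodd
  obtain ⟨c, rfl⟩ := heven
  have hδ : (2 * m + 1 - 1) * (q - 1) / 2 = m * (q - 1) := by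
    rw [show (2 * m + 1 - 1) * (q - 1) = 2 * (m * (q - 1)) by ring]
    exact Int.mul_ediv_cancel_left _ (by norm_num)
  have hX : (2 * m + 1 + (c + c) - 1) / 2 = m + c := by omega
  have hm : (2 * m + 1 + 1) / 2 = m + 1 := by omega
  have hρm : ρ ≤ m - 1 := by omega
  rw [hδ] at h
  rw [hX, hm] at hrρ
  obtain ⟨d, hd⟩ := hrrb.symm.dvd
  -- `q * r̄ = 1 + p * e` with `e = d + k * r̄`; multiplying the representation by `r̄` isolates `u`.
  have hcong : u ≡ m + c + ρ * (c + c) [ZMOD 2 * m + 1] := by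
    apply Int.ModEq.symm
    rw [Int.modEq_iff_dvd]
    refine ⟨(d + k * (c + c)) * (m - u) - t * (c + c) - c, ?_⟩
    subst hqkr
    linear_combination (-(c + c)) * h + (m - u) * hd
  have hmod : u % (2 * m + 1) ≤ u := by
    nlinarith [Int.mul_ediv_add_emod u (2 * m + 1),
      mul_nonneg (by omega : (0 : ℤ) ≤ 2 * m + 1)
        (Int.ediv_nonneg hu (by omega : (0 : ℤ) ≤ 2 * m + 1))]
  rw [hcong] at hmod
  have hu1 : m + 1 ≤ u := hrρ.trans hmod
  nlinarith [mul_nonneg ht (by omega : (0 : ℤ) ≤ 2 * m + 1),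
    mul_le_mul_of_nonneg_right hu1 (by omega : (0 : ℤ) ≤ q)]
end

section
/- Let p, q > 1 be coprime integers with p odd and r̄ even. Let ρ be an integer with 0 ≤ ρ ≤ (p−1)/2 and r′_ρ ≤ (p−1)/2. Then δ + ρ ∈ S(p,q); indeed there exists an integer t ≥ 0 with δ + ρ = t·p + r′_ρ·q. -/
theorem stmt13 (p q k r rb ρ : ℤ) (hp : 1 < p) (hq : 1 < q)
    (hpq : Int.gcd p q = 1) (hpodd : Odd p)
    (hqkr : q = k * p + r) (hr0 : 0 < r) (hrp : r < p)
    (hrb0 : 0 < rb) (hrbp : rb < p) (hrrb : r * rb ≡ 1 [ZMOD p])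
    (heven : Even rb)
    (hρ0 : 0 ≤ ρ) (hρ1 : ρ ≤ (p - 1) / 2)
    (hrρ : ((p + rb - 1) / 2 + ρ * rb) % p ≤ (p - 1) / 2) :
    (p - 1) * (q - 1) / 2 + ρ ∈ Spq p q ∧
    ∃ t : ℤ, 0 ≤ t ∧
      (p - 1) * (q - 1) / 2 + ρ = t * p + (((p + rb - 1) / 2 + ρ * rb) % p) * q := by
  have hu0 : 0 ≤ ((p + rb - 1) / 2 + ρ * rb) % p := Int.emod_nonneg _ (by omega)
  suffices h : ∃ t : ℤ, 0 ≤ t ∧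
      (p - 1) * (q - 1) / 2 + ρ = t * p + (((p + rb - 1) / 2 + ρ * rb) % p) * q by
    obtain ⟨t, ht, e⟩ := h
    exact ⟨⟨t, _, ht, hu0, e⟩, t, ht, e⟩
  obtain ⟨m, hm⟩ := hpodd
  obtain ⟨s, hs⟩ := heven
  obtain ⟨c, hc⟩ : p ∣ ((p + rb - 1) / 2 + ρ * rb) - ((p + rb - 1) / 2 + ρ * rb) % p :=
    Int.dvd_self_sub_emod
  obtain ⟨d, hd⟩ := hrrb.symm.dvd
  have h1 : (p + rb - 1) / 2 = m + s := by omega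
  have h2 : (p - 1) / 2 = m := by omega
  have h3 : (p - 1) * (q - 1) / 2 = m * (q - 1) := by
    rw [hm, show (2 * m + 1 - 1) * (q - 1) = 2 * (m * (q - 1)) by ring]
    omega
  rw [h1] at hc hrρ hu0 ⊢
  rw [h2] at hrρ
  rw [h3]
  generalize (m + s + ρ * rb) % p = u at *
  -- `2sq - 1 = p e`; parity then makes `e` odd.
  obtain ⟨e, he⟩ : ∃ e, 2 * (s * q) = 1 + p * e :=
    ⟨d + k * rb, by rw [hqkr]; rw [hs] at hd ⊢; linear_combination hd⟩
  obtain ⟨f, hf⟩ : ∃ f, e = 2 * f + 1 := by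
    have h4 : p * e = 2 * (m * e) + e := by rw [hm]; ring
    exact ⟨s * q - 1 - m * e, by omega⟩
  have hsq : s * q = 1 + m + p * f := by
    have : 2 * (s * q) = 2 * (1 + m + p * f) := by
      rw [he, hf]; linear_combination hm
    omega
  have key : m * (q - 1) + ρ = (c * q - 1 - ρ - f * (1 + 2 * ρ)) * p + u * q := by
    rw [hs] at hc
    linear_combination q * hc - (1 + 2 * ρ) * hsq + (1 + ρ) * hm
  refine ⟨_, ?_, key⟩
  generalize c * q - 1 - ρ - f * (1 + 2 * ρ) = t at key
  by_contra! ht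
  nlinarith [mul_nonneg (sub_nonneg.2 hrρ) (by omega : 0 ≤ q)]
end

section
/- Let p, q > 1 be coprime integers with p even and k + l even. Let ρ ≥ 0 be an integer with r_ρ ≤ p/2 − 1. Then δ + ρ ∈ S(p,q); indeed there exists an integer t ≥ 0 with δ + ρ = t·p + r_ρ·q. -/
theorem stmt14 (p q k r rb l ρ : ℤ) (hp : 1 < p) (hq : 1 < q)
    (hpq : Int.gcd p q = 1) (hpeven : Even p)
    (hqkr : q = k * p + r) (hr0 : 0 < r) (hrp : r < p)
    (hrb0 : 0 < rb) (hrbp : rb < p) (hrrb : r * rb = 1 + l * p)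
    (hkl : Even (k + l))
    (hρ0 : 0 ≤ ρ)
    (hrρ : ((rb - 1) / 2 + ρ * rb) % p ≤ p / 2 - 1) :
    (p - 1) * (q - 1) / 2 + ρ ∈ Spq p q ∧
    ∃ t : ℤ, 0 ≤ t ∧
      (p - 1) * (q - 1) / 2 + ρ = t * p + (((rb - 1) / 2 + ρ * rb) % p) * q := by
  have hr_odd : Odd (r * rb) := by
    rw [hrrb]
    exact odd_one.add_even (hpeven.mul_left l)
  obtain ⟨hr, hrb⟩ := Int.odd_mul.mp hr_odd
  have hq_odd : Odd q := by
    rw [hqkr]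
    exact (hpeven.mul_left k).add_odd hr
  obtain ⟨m, rfl⟩ := hpeven
  obtain ⟨n, hn⟩ := hq_odd
  obtain ⟨a, rfl⟩ := hrb
  obtain ⟨c, hc⟩ := hkl
  have hδ : (m + m - 1) * (q - 1) / 2 = (m + m - 1) * n := by
    rw [hn, show (m + m - 1) * (2 * n + 1 - 1) = (m + m - 1) * n * 2 by ring]
    exact Int.mul_ediv_cancel _ (by norm_num)
  have ha : (2 * a + 1 - 1) / 2 = a := by omega
  have hm : (m + m) / 2 = m := by omega
  rw [hm] at hrρ
  rw [hδ]
  rw [ha] at hrρ ⊢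
  set u := (a + ρ * (2 * a + 1)) % (m + m) with hu
  have hu0 : 0 ≤ u := Int.emod_nonneg _ (by omega)
  have hdiv := Int.emod_add_mul_ediv (a + ρ * (2 * a + 1)) (m + m)
  rw [← hu] at hdiv
  set s := (a + ρ * (2 * a + 1)) / (m + m)
  have hqrb : q * (2 * a + 1) = 1 + (k * (2 * a + 1) + l) * (m + m) := by
    rw [hqkr]
    linear_combination hrrb
  -- `n - k * a - c` is half of `q - 1 - k * rb - l`, where `k + l = 2c`.
  have key : (m + m - 1) * n + ρ
      = ((n - k * a - c) - ρ * (k * (2 * a + 1) + l) + s * q) * (m + m) + u * q := by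
    have h2 : 2 * ((m + m - 1) * n + ρ) = 2 * (((n - k * a - c) - ρ * (k * (2 * a + 1) + l) + s * q)
        * (m + m) + u * q) := by
      linear_combination (-2 * q) * hdiv - (1 + 2 * ρ) * hqrb - (m + m) * hc + hn
    linarith
  have main : ∃ t : ℤ, 0 ≤ t ∧ (m + m - 1) * n + ρ = t * (m + m) + u * q := by
    refine ⟨_, ?_, key⟩
    generalize (n - k * a - c) - ρ * (k * (2 * a + 1) + l) + s * q = t at key ⊢
    by_contra! ht
    have h1 : t * (m + m) ≤ -1 * (m + m) := mul_le_mul_of_nonneg_right (by omega) (by omega)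
    have h2 : u * q ≤ (m - 1) * q := mul_le_mul_of_nonneg_right hrρ (by omega)
    rw [hn] at h2 key
    nlinarith
  obtain ⟨t, ht, h⟩ := main
  exact ⟨⟨t, u, ht, hu0, h⟩, t, ht, h⟩
end

section
/- Let p, q > 1 be coprime integers with p even and k + l even. Let ρ be an integer with 0 ≤ ρ ≤ p/2 and r_ρ ≥ p/2. Then δ + ρ ∉ S(p,q). -/
theorem stmt15 (p q k r rb l ρ : ℤ) (hp : 1 < p) (hq : 1 < q)
    (hpq : Int.gcd p q = 1) (hpeven : Even p)
    (hqkr : q = k * p + r) (hr0 : 0 < r) (hrp : r < p)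
    (hrb0 : 0 < rb) (hrbp : rb < p) (hrrb : r * rb = 1 + l * p)
    (hkl : Even (k + l))
    (hρ0 : 0 ≤ ρ) (hρ1 : ρ ≤ p / 2)
    (hrρ : p / 2 ≤ ((rb - 1) / 2 + ρ * rb) % p) :
    (p - 1) * (q - 1) / 2 + ρ ∉ Spq p q := by
  rintro ⟨t, u, ht, hu, hN⟩
  obtain ⟨m, hm⟩ := hpeven
  obtain ⟨c, hc⟩ := hkl
  have hrb_odd : Odd rb := by
    have h : Odd (r * rb) := ⟨l * m, by rw [hrrb, hm]; ring⟩
    exact (Int.odd_mul.mp h).2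
  obtain ⟨b, hb⟩ := hrb_odd
  -- `q` is invertible modulo `2 * p`, with inverse `rb`.
  have hqrb : q * rb = 1 + 2 * p * (b * k + c) := by
    have hl : l = c + c - k := by linarith
    have h1 : q * rb = k * p * rb + r * rb := by rw [hqkr]; ring
    rw [h1, hrrb, hl, hb]; ring
  have hq_odd : Odd q := by
    have h : Odd (q * rb) := ⟨p * (b * k + c), by rw [hqrb]; ring⟩
    exact (Int.odd_mul.mp h).1
  obtain ⟨h, hh⟩ := hq_odd
  generalize b * k + c = e at hqrb
  have hδ : (p - 1) * (q - 1) / 2 = (p - 1) * h := by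
    have h2 : (p - 1) * (q - 1) = 2 * ((p - 1) * h) := by rw [hh]; ring
    rw [h2]; exact Int.mul_ediv_cancel_left _ (by norm_num)
  rw [hδ] at hN
  have hb2 : (rb - 1) / 2 = b := by omega
  have hm2 : p / 2 = m := by omega
  rw [hb2, hm2] at hrρ
  rw [hm2] at hρ1
  have hrbh : rb * h = p * e - b := by
    have h2 : 2 * (rb * h) = 2 * (p * e - b) := by
      rw [hh] at hqrb; linear_combination hqrb - hb
    linarith
  have hu_eq : u = b + ρ * rb + p * (-rb * t - 2 * e * u + (p - 1) * e - b) := by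
    linear_combination (-rb) * hN + (p - 1) * hrbh - u * hqrb
  have hmod : u % p = (b + ρ * rb) % p := by
    conv_lhs => rw [hu_eq]
    exact Int.add_mul_emod_self_left _ _ _
  -- A nonnegative `u` is at least its remainder modulo `p`.
  have hum : m ≤ u := by
    have h1 : 0 ≤ p * (u / p) :=
      mul_nonneg (by linarith) (Int.ediv_nonneg hu (by linarith))
    have h2 := Int.emod_add_mul_ediv u p
    linarith
  have htp : 0 ≤ t * p := mul_nonneg ht (by linarith)
  have huq : m * q ≤ u * q := mul_le_mul_of_nonneg_right hum (by linarith)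
  have hmh : (p - 1) * h + ρ = m * q + (ρ - m - h) := by rw [hm, hh]; ring
  have hh0 : 0 < h := by omega
  linarith
end

section
/- Let p, q > 1 be coprime integers with p even and k + l odd. Let ρ be an integer with 0 ≤ ρ ≤ p/2 − 1 and r′_ρ ≥ p/2. Then δ + ρ ∉ S(p,q). -/
theorem stmt16 (p q k r rb l ρ : ℤ) (hp : 1 < p) (hq : 1 < q)
    (hpq : Int.gcd p q = 1) (hpeven : Even p)
    (hqkr : q = k * p + r) (hr0 : 0 < r) (hrp : r < p)
    (hrb0 : 0 < rb) (hrbp : rb < p) (hrrb : r * rb = 1 + l * p)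
    (hkl : Odd (k + l))
    (hρ0 : 0 ≤ ρ) (hρ1 : ρ ≤ p / 2 - 1)
    (hrρ : p / 2 ≤ ((p + rb - 1) / 2 + ρ * rb) % p) :
    (p - 1) * (q - 1) / 2 + ρ ∉ Spq p q := by
  rintro ⟨t, u, ht, hu, h⟩
  obtain ⟨m, rfl⟩ := hpeven.two_dvd
  have hinv : q * rb = 1 + 2 * m * (k * rb + l) := by
    rw [hqkr]; linear_combination hrrb
  have hodd : Odd (q * rb) := ⟨m * (k * rb + l), by rw [hinv]; ring⟩
  obtain ⟨⟨s, hs⟩, ⟨b, hb⟩⟩ := Int.odd_mul.mp hodd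
  obtain ⟨c, hc⟩ := hkl
  have hδ : (2 * m - 1) * (q - 1) / 2 = (2 * m - 1) * s := by
    rw [show (2 * m - 1) * (q - 1) = 2 * ((2 * m - 1) * s) by rw [hs]; ring]
    omega
  have hhalf : (2 * m + rb - 1) / 2 = m + b := by omega
  have hm : 2 * m / 2 = m := by omega
  rw [hδ] at h
  rw [hhalf, hm] at hrρ
  rw [hm] at hρ1
  -- The parity of `k * rb + l` enters here, through the single summand `m`.
  have hrs : rb * s = m * (2 * (k * b + c) + 1) - b := by
    have h2 : 2 * (rb * s) = 2 * (m * (2 * (k * b + c) + 1) - b) := by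
      linear_combination hinv - rb * hs - hb + 2 * m * k * hb + 2 * m * hc
    omega
  have hcong : m + b + ρ * rb =
      u + 2 * m * (-(rb * s - (k * b + c) - 1 - t * rb - u * (k * rb + l))) := by
    linear_combination rb * h + hrs + u * hinv
  rw [hcong, Int.add_mul_emod_self_left] at hrρ
  have hum : m ≤ u := by
    rcases lt_or_ge u (2 * m) with h1 | h1
    · rwa [Int.emod_eq_of_lt hu h1] at hrρ
    · omega
  have h1 : m * q ≤ u * q := mul_le_mul_of_nonneg_right hum (by omega)
  have h2 : 0 ≤ t * (2 * m) := mul_nonneg ht (by omega)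
  rw [hs] at h1 h
  nlinarith
end

section
/- Let p, q > 1 be coprime integers with p even and k + l odd. Let ρ be an integer with 0 ≤ ρ ≤ p/2 and r′_ρ ≤ p/2 − 1. Then δ + ρ ∈ S(p,q); indeed there exists an integer t ≥ 0 with δ + ρ = t·p + r′_ρ·q. -/
theorem stmt17 (p q k r rb l ρ : ℤ) (hp : 1 < p) (hq : 1 < q)
    (hpq : Int.gcd p q = 1) (hpeven : Even p)
    (hqkr : q = k * p + r) (hr0 : 0 < r) (hrp : r < p)
    (hrb0 : 0 < rb) (hrbp : rb < p) (hrrb : r * rb = 1 + l * p)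
    (hkl : Odd (k + l))
    (hρ0 : 0 ≤ ρ) (hρ1 : ρ ≤ p / 2)
    (hrρ : ((p + rb - 1) / 2 + ρ * rb) % p ≤ p / 2 - 1) :
    (p - 1) * (q - 1) / 2 + ρ ∈ Spq p q ∧
    ∃ t : ℤ, 0 ≤ t ∧
      (p - 1) * (q - 1) / 2 + ρ = t * p + (((p + rb - 1) / 2 + ρ * rb) % p) * q := by
  obtain ⟨m, rfl⟩ := hpeven
  have hrrb_odd : Odd (r * rb) := ⟨l * m, by rw [hrrb]; ring⟩
  obtain ⟨hr_odd, b, rfl⟩ := Int.odd_mul.mp hrrb_odd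
  have hq_odd : Odd q := by
    obtain ⟨a, rfl⟩ := hr_odd
    exact ⟨k * m + a, by rw [hqkr]; ring⟩
  obtain ⟨n, hn⟩ := hq_odd
  obtain ⟨c, hc⟩ := hkl
  have hδ : (m + m - 1) * (q - 1) / 2 = (m + m - 1) * n := by
    rw [hn, show (m + m - 1) * (2 * n + 1 - 1) = (m + m - 1) * n * 2 by ring]
    exact Int.mul_ediv_cancel _ (by norm_num)
  have hu : (m + m + (2 * b + 1) - 1) / 2 = m + b := by omega
  have hm : (m + m) / 2 = m := by omega
  rw [hm] at hρ1 hrρ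
  rw [hu] at hrρ ⊢
  rw [hδ]
  set u := m + b + ρ * (2 * b + 1) with hu_def
  have hdiv := Int.emod_add_mul_ediv u (m + m)
  have hnonneg : 0 ≤ u % (m + m) := Int.emod_nonneg _ (by omega)
  set v := u % (m + m)
  set w := u / (m + m)
  have hqrb : q * (2 * b + 1) = 1 + (l + k * (2 * b + 1)) * (m + m) := by
    rw [hqkr]; linear_combination hrrb
  -- `c + 1 + k * b` is half of the even number `l + k * rb + 1`.
  have huq : u * q = (m + m - 1) * n + ρ
      + (c + 1 + k * b + ρ * (l + k * (2 * b + 1))) * (m + m) := by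
    have h2 : 2 * (u * q) = 2 * ((m + m - 1) * n + ρ
        + (c + 1 + k * b + ρ * (l + k * (2 * b + 1))) * (m + m)) := by
      rw [hu_def]
      linear_combination (1 + 2 * ρ) * hqrb + (m + m) * hc + (m + m - 1) * hn
    linarith
  have ht : ∃ t : ℤ, 0 ≤ t ∧ (m + m - 1) * n + ρ = t * (m + m) + v * q := by
    refine ⟨w * q - (c + 1 + k * b + ρ * (l + k * (2 * b + 1))), ?_, ?_⟩
    · have key : (m + m - 1) * n + ρ = (w * q - (c + 1 + k * b + ρ * (l + k * (2 * b + 1))))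
          * (m + m) + v * q := by
        linear_combination (-1) * huq - q * hdiv
      generalize w * q - (c + 1 + k * b + ρ * (l + k * (2 * b + 1))) = t at key ⊢
      by_contra hneg
      have hle : t ≤ -1 := by omega
      have h1 : v * q ≤ (m - 1) * q := mul_le_mul_of_nonneg_right hrρ (by omega)
      have h2 : t * (m + m) ≤ -1 * (m + m) := mul_le_mul_of_nonneg_right hle (by omega)
      rw [hn] at h1 key
      nlinarith
    · linear_combination (-1) * huq - q * hdiv
  obtain ⟨t, ht0, ht⟩ := ht
  exact ⟨⟨t, v, ht0, hnonneg, ht⟩, t, ht0, ht⟩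
end

section
/- Let p, q > 1 be coprime integers. Then δ = (p−1)(q−1)/2 belongs to S(p,q) if and only if either (p is odd and r̄ is odd) or (p is even and k + l is even). -/
/-- Numbers below `p * q` have at most one representation `t * p + u * q` with `t, u ≥ 0`:
both `q`-coefficients lie in `[0, p)` and they agree modulo `p`. -/
lemma rep_unique {p q t u t' u' : ℤ} (hp : 0 < p) (hq : 0 < q) (hpq : IsCoprime p q)
    (ht : 0 ≤ t) (hu : 0 ≤ u) (ht' : 0 ≤ t') (hu' : 0 ≤ u')
    (h : t * p + u * q = t' * p + u' * q) (hlt : t * p + u * q < p * q) :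
    t = t' ∧ u = u' := by
  have hup : u < p := by nlinarith [mul_nonneg ht hp.le]
  have hup' : u' < p := by nlinarith [mul_nonneg ht' hp.le]
  have hd : p ∣ u - u' :=
    hpq.dvd_of_dvd_mul_right ⟨t' - t, by linear_combination h⟩
  have huu : u = u' := by
    have := Int.eq_zero_of_abs_lt_dvd hd (abs_lt.2 ⟨by linarith, by linarith⟩)
    linarith
  subst huu
  exact ⟨mul_right_cancel₀ hp.ne' (by linarith), rfl⟩

theorem stmt19 (p q k r rb l : ℤ) (hp : 1 < p) (hq : 1 < q)
    (hpq : Int.gcd p q = 1)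
    (hqkr : q = k * p + r) (hr0 : 0 < r) (hrp : r < p)
    (hrb0 : 0 < rb) (hrbp : rb < p) (hrrb : r * rb = 1 + l * p) :
    (p - 1) * (q - 1) / 2 ∈ Spq p q ↔
      ((Odd p ∧ Odd rb) ∨ (Even p ∧ Even (k + l))) := by
  obtain ⟨m, hm⟩ : ∃ m, m = k * rb + l := ⟨_, rfl⟩
  have hbez : q * rb = 1 + m * p := by
    subst hm hqkr
    linear_combination hrrb
  have hmq : m < q := by nlinarith
  have hcop : IsCoprime p q := Int.isCoprime_iff_gcd_eq_one.2 hpq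
  have hpar : (Even q ∨ Even rb) ↔ ¬ (Even m ∨ Even p) := by
    have := congrArg Even hbez
    simpa [Int.even_add, Int.even_mul] using this
  have hparm : Even m ↔ ((Even k ∨ Even rb) ↔ Even l) := by
    simp [hm, Int.even_add, Int.even_mul]
  -- `p` and `q` are not both even, so the division by 2 is exact
  have hδ : 2 * ((p - 1) * (q - 1) / 2) = (p - 1) * (q - 1) := by
    apply Int.mul_ediv_cancel'
    rw [← even_iff_two_dvd]
    simp only [Int.even_mul, Int.even_sub, Int.not_even_one, iff_false]
    by_cases hpe : Even p <;> by_cases hqe : Even q <;> simp only [hpe, hqe] at hpar ⊢ <;> simp at *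
  have h2 : (p - 1) * (q - 1) = (q - 1 - m) * p + (rb - 1) * q := by
    linear_combination -hbez
  have key : (p - 1) * (q - 1) / 2 ∈ Spq p q ↔ Even (q - 1 - m) ∧ Even (rb - 1) := by
    constructor
    · rintro ⟨t, u, ht, hu, h⟩
      obtain ⟨h1, h2⟩ := rep_unique (t := q - 1 - m) (u := rb - 1) (t' := 2 * t) (u' := 2 * u)
        (by linarith) (by linarith) hcop (by linarith) (by linarith) (by linarith) (by linarith)
        (by linear_combination 2 * h - hδ - h2) (by linarith)
      rw [h1, h2]
      exact ⟨even_two_mul t, even_two_mul u⟩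
    · rintro ⟨⟨t, ht⟩, ⟨u, hu⟩⟩
      refine ⟨t, u, by linarith, by linarith, ?_⟩
      rw [ht, hu] at h2
      linarith
  rw [key]
  simp only [Int.even_sub, Int.even_add, Int.not_even_one, iff_false, ← Int.not_even_iff_odd]
  clear key h2 hδ hcop hmq hbez hm hrrb hrbp hrb0 hrp hr0 hqkr hpq hq hp
  by_cases hpe : Even p <;> by_cases hqe : Even q <;> by_cases hre : Even rb <;>
    by_cases hme : Even m <;> by_cases hke : Even k <;> by_cases hle : Even l <;>
    simp only [hpe, hqe, hre, hme, hke, hle] at hpar hparm ⊢ <;> simp at *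
end
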